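/- arXiv:0807.4243 — 3 statements merged into one kernel-verified Lean document; each statement's English description precedes it below -/
import Mathlib

section
/- Let F be an algebraically closed field, S = F[x,y], and let V ⊆ S_d (with d ≥ 1) be an F-vector space of forms of degree d whose greatest common divisor is 1; let I ⊆ S be the ideal generated by V. For a subspace V' ⊆ V, let r_{V'} denote the degree of the greatest common divisor of the forms in V', and set r := max{ r_{V'} : V' ⊆ V a linear subspace of codimension 1 }. Then for all sufficiently large t one has reg I^t = dt + r − 1; equivalently, for all sufficiently large t, every form of S of degree ≥ dt + r − 1 lies in I^t, while not every form of degree dt + r − 2 lies in I^t. -/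
open MvPolynomial

/-- `g` is a greatest common divisor of the set of polynomials `V'`. -/
def IsGCDOf {F : Type*} [Field F] (g : MvPolynomial (Fin 2) F)
    (V' : Set (MvPolynomial (Fin 2) F)) : Prop :=
  (∀ v ∈ V', g ∣ v) ∧ ∀ h : MvPolynomial (Fin 2) F, (∀ v ∈ V', h ∣ v) → h ∣ g

/-!
Let `𝔪 = (x, y)` and `A = F[V]`. As `I` is `𝔪`-primary, `F[x, y]` is finite over `A`. For a point
`φ` of the variety of `A` that does not vanish on `V`, let `g` be the gcd of the hyperplane `V ∩
ker φ`, of degree at most `r`, and choose `f ∈ V` with `φ f ≠ 0`. The fibre of `F[x, y]` over `φ`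
is then a quotient of `F[x, y] / (g)` on which `f` acts by a nonzero scalar; as `(f, g)` contains
`𝔪 ^ (d + r - 1)`, the fibre is spanned by the polynomials of degree at most `r + d - 2`. By
Nakayama and the Nullstellensatz, the `A`-module `K` spanned by these polynomials contains a power
of `I`, hence all forms of large degree. An expression of a form of degree at least `d * t + r - 1`
as an element of `K` uses at least `t` factors from `V`, so the form lies in `I ^ t`.

Conversely, if `g` is the gcd of a hyperplane of `V`, of degree `r`, and `f ∈ V` lies outside of
it, then `I ^ t ⊆ (f ^ t, g)`, and comparing dimensions in degree `d * t + r - 2` shows that this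
ideal does not contain all the forms of that degree.
-/

section Forms

variable {σ R : Type*} [CommSemiring R] {f p : MvPolynomial σ R} {d k n : ℕ}

theorem homogeneousComponent_mul_of_isHomogeneous (hf : f.IsHomogeneous d)
    (a : MvPolynomial σ R) (n : ℕ) :
    homogeneousComponent n (f * a) = if d ≤ n then f * homogeneousComponent (n - d) a else 0 := by
  let _ := gradedAlgebra (σ := σ) (R := R)
  have key (q : MvPolynomial σ R) (i : ℕ) :
      (DirectSum.decompose (homogeneousSubmodule σ R) q i : MvPolynomial σ R) =
        homogeneousComponent i q :=
    decomposition.decompose'_apply q i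
  simpa only [key] using DirectSum.coe_decompose_mul_of_left_mem (homogeneousSubmodule σ R)
    (b := a) n ((mem_homogeneousSubmodule d f).2 hf)

theorem mem_pow_idealOfVars_of_isHomogeneous (hp : p.IsHomogeneous n) (h : k ≤ n) :
    p ∈ idealOfVars σ R ^ k := by
  rw [mem_pow_idealOfVars_iff']
  exact fun x hx => hp.coeff_eq_zero (hx.trans_le h).ne

theorem pow_idealOfVars_le_of_forall_isHomogeneous {J : Ideal (MvPolynomial σ R)}
    (h : ∀ p : MvPolynomial σ R, p.IsHomogeneous n → p ∈ J) : idealOfVars σ R ^ n ≤ J := by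
  rw [pow_idealOfVars_eq_span, Ideal.span_le]
  rintro _ ⟨x, hx, rfl⟩
  exact h _ (isHomogeneous_monomial _ hx)

theorem not_isUnit_of_isHomogeneous [Nontrivial R] (hd : 0 < d) (hf : f.IsHomogeneous d) :
    ¬ IsUnit f := by
  intro h
  have hc := h.map (constantCoeff (σ := σ) (R := R))
  rw [constantCoeff_eq, hf.coeff_eq_zero (by simpa using hd.ne)] at hc
  exact not_isUnit_zero hc

theorem X_dvd_of_coeff_single_eq_zero {p : MvPolynomial (Fin 2) R} (hp : p.IsHomogeneous d)
    (h : p.coeff (Finsupp.single 1 d) = 0) : X 0 ∣ p := by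
  rw [X_dvd_iff_modMonomial_eq_zero]
  ext x
  by_cases hx : Finsupp.single 0 1 ≤ x
  · rw [coeff_modMonomial_of_le _ hx, coeff_zero]
  have hx0 : x 0 = 0 := by simpa using hx
  rw [coeff_modMonomial_of_not_le _ hx, coeff_zero]
  by_cases hxd : x.degree = d
  · have hx1 : x = Finsupp.single 1 d := by
      ext i
      fin_cases i
      · simpa using hx0
      · simpa [Finsupp.degree_eq_sum, hx0] using hxd
    rw [hx1, h]
  · exact hp.coeff_eq_zero hxd

theorem order_coe_le_totalDegree (hp : p ≠ 0) :
    (p : MvPowerSeries σ R).order ≤ p.totalDegree := by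
  obtain ⟨x, hx⟩ := ne_zero_iff.1 hp
  refine (MvPowerSeries.order_le (by rwa [coeff_coe])).trans ?_
  exact_mod_cast le_totalDegree (mem_support_iff.2 hx)

theorem isHomogeneous_iff_le_order_and_totalDegree_le :
    p.IsHomogeneous n ↔ n ≤ (p : MvPowerSeries σ R).order ∧ p.totalDegree ≤ n := by
  constructor
  · refine fun hp => ⟨MvPowerSeries.nat_le_order fun x hx => ?_, hp.totalDegree_le⟩
    rw [coeff_coe, hp.coeff_eq_zero hx.ne]
  · rintro ⟨hord, hdeg⟩ x hx
    change Finsupp.weight (fun _ => 1) x = n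
    rw [← Finsupp.degree_eq_weight_one]
    refine le_antisymm ((le_totalDegree (mem_support_iff.2 hx)).trans hdeg) ?_
    exact_mod_cast hord.trans (MvPowerSeries.order_le (by rwa [coeff_coe]))

/-- Graded Nakayama: homogeneous multipliers of positive degree that generate an `𝔪`-primary ideal
span everything starting from the polynomials of low degree. -/
theorem eq_top_of_forall_mul_mem {W : Submodule R (MvPolynomial σ R)}
    {G : Set (MvPolynomial σ R)} {N : ℕ}
    (hG : ∀ u ∈ G, (∃ d, 0 < d ∧ u.IsHomogeneous d) ∧ ∀ a ∈ W, u * a ∈ W)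
    (hN : idealOfVars σ R ^ N ≤ Ideal.span G)
    (hW : ∀ p : MvPolynomial σ R, p.totalDegree < N → p ∈ W) : W = ⊤ := by
  have forms_mem (n : ℕ) : ∀ p : MvPolynomial σ R, p.IsHomogeneous n → p ∈ W := by
    induction n using Nat.strong_induction_on with
    | _ n ih =>
      intro p hp
      obtain hn | hn := lt_or_ge n N
      · exact hW p (hp.totalDegree_le.trans_lt hn)
      obtain ⟨m, a, u, hau⟩ := Submodule.mem_span_set'.1
        (hN (mem_pow_idealOfVars_of_isHomogeneous hp hn))
      rw [← homogeneousComponent_eq_self hp, ← hau, map_sum]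
      refine W.sum_mem fun i _ => ?_
      obtain ⟨⟨d, hd, hu⟩, huW⟩ := hG _ (u i).2
      rw [smul_eq_mul, mul_comm, homogeneousComponent_mul_of_isHomogeneous hu]
      split_ifs
      · exact huW _ (ih _ (by omega) _ (homogeneousComponent_isHomogeneous _ _))
      · exact W.zero_mem
  refine eq_top_iff.2 fun p _ => ?_
  rw [← sum_homogeneousComponent p]
  exact W.sum_mem fun n _ => forms_mem n _ (homogeneousComponent_isHomogeneous n p)

end Forms

section HomogeneousFactors

variable {σ R : Type*} [CommRing R] [IsDomain R] {f g p : MvPolynomial σ R} {d n : ℕ}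

theorem isHomogeneous_of_dvd (hp : p.IsHomogeneous n) (hp0 : p ≠ 0) (h : g ∣ p) :
    g.IsHomogeneous g.totalDegree := by
  obtain ⟨u, rfl⟩ := h
  have hg0 := left_ne_zero_of_mul hp0
  have hu0 := right_ne_zero_of_mul hp0
  rw [isHomogeneous_iff_le_order_and_totalDegree_le] at hp ⊢
  refine ⟨?_, le_rfl⟩
  have hu := order_coe_le_totalDegree hu0
  have hsum := hp.1
  have hle := hp.2
  rw [totalDegree_mul_of_isDomain hg0 hu0] at hle
  rw [coe_mul, MvPowerSeries.order_mul] at hsum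
  have key : (g.totalDegree + u.totalDegree : ℕ∞) ≤ (g : MvPowerSeries σ R).order + u.totalDegree :=
    calc (g.totalDegree + u.totalDegree : ℕ∞) ≤ n := by exact_mod_cast hle
      _ ≤ _ := hsum
      _ ≤ _ := by gcongr
  exact (ENat.add_le_add_iff_right (ENat.natCast_ne_top _)).1 key

theorem isHomogeneous_of_mul_left (hg : g.IsHomogeneous d) (hg0 : g ≠ 0)
    (hgf : (g * f).IsHomogeneous n) : f.IsHomogeneous (n - d) := by
  obtain rfl | hf0 := eq_or_ne f 0
  · exact isHomogeneous_zero _ _ _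
  have hdeg := totalDegree_mul_of_isDomain hg0 hf0
  rw [hgf.totalDegree (mul_ne_zero hg0 hf0), hg.totalDegree hg0] at hdeg
  rw [hdeg, Nat.add_sub_cancel_left]
  exact isHomogeneous_of_dvd hgf (mul_ne_zero hg0 hf0) (dvd_mul_left f g)

theorem isUnit_of_totalDegree_eq_zero {σ F : Type*} [Field F] {g : MvPolynomial σ F} (hg0 : g ≠ 0)
    (h : g.totalDegree = 0) : IsUnit g := by
  refine isUnit_iff_totalDegree_of_isReduced.2 ⟨isUnit_iff_ne_zero.2 fun hc => hg0 ?_, h⟩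
  rw [totalDegree_eq_zero_iff_eq_C.1 h, hc, C_0]

end HomogeneousFactors

section DegreePart

/-- The forms of degree `n` lying in an ideal `J` of a polynomial ring, as a module over the
coefficients; for homogeneous `J` this is the graded piece `J_n`, whose dimension is the value at
`n` of the Hilbert function of `J`. -/
noncomputable def degreePart {σ R : Type*} [CommSemiring R] (J : Ideal (MvPolynomial σ R)) (n : ℕ) :
    Submodule R (MvPolynomial σ R) :=
  J.restrictScalars R ⊓ homogeneousSubmodule σ R n

theorem finrank_homogeneousSubmodule {σ R : Type*} [Fintype σ] [CommRing R] [StrongRankCondition R]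
    (n : ℕ) : Module.finrank R (homogeneousSubmodule σ R n) = (Fintype.card σ).multichoose n := by
  classical
  have e : {x : σ →₀ ℕ | x.degree = n} ≃ Finset.univ.finsuppAntidiag (μ := ℕ) n :=
    Equiv.subtypeEquivRight fun x => by simp [Finset.mem_finsuppAntidiag, Finsupp.degree_eq_sum]
  have : Fintype {x : σ →₀ ℕ | x.degree = n} := Fintype.ofEquiv _ e.symm
  rw [homogeneousSubmodule_eq_finsupp_supported,
    (AddMonoidAlgebra.supportedEquivFinsupp _).finrank_eq, Module.finrank_finsupp_self,
    Fintype.card_congr e, Fintype.card_coe, Finset.card_finsuppAntidiag_nat_eq_multichoose,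
    Finset.card_univ]

instance finite_homogeneousSubmodule {σ R : Type*} [Finite σ] [CommSemiring R] (n : ℕ) :
    Module.Finite R (homogeneousSubmodule σ R n) :=
  Module.Finite.iff_fg.2 (homogeneousSubmodule_fg σ R n)

instance finite_degreePart {σ F : Type*} [Finite σ] [Field F] (J : Ideal (MvPolynomial σ F))
    (n : ℕ) : Module.Finite F (degreePart J n) :=
  Submodule.finiteDimensional_of_le inf_le_right

section Principal

variable {σ R : Type*} [CommSemiring R] {f g : MvPolynomial σ R} {d e n : ℕ}

theorem degreePart_span_singleton_eq_map (hf : f.IsHomogeneous d) (hdn : d ≤ n) :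
    degreePart (Ideal.span {f}) n =
      (homogeneousSubmodule σ R (n - d)).map (LinearMap.mulLeft R f) := by
  ext p
  constructor
  · rintro ⟨hfp, hp⟩
    obtain ⟨a, rfl⟩ := Ideal.mem_span_singleton.1 hfp
    refine ⟨_, homogeneousComponent_mem (n - d) a, ?_⟩
    rw [← homogeneousComponent_eq_self hp, homogeneousComponent_mul_of_isHomogeneous hf,
      if_pos hdn, LinearMap.mulLeft_apply]
  · rintro ⟨a, ha, rfl⟩
    refine ⟨Ideal.mem_span_singleton.2 (dvd_mul_right f a), ?_⟩
    have hfa := hf.mul ha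
    rwa [Nat.add_sub_cancel' hdn] at hfa

theorem degreePart_span_singleton_eq_bot (hf : f.IsHomogeneous d) (hnd : n < d) :
    degreePart (Ideal.span {f}) n = ⊥ := by
  refine (Submodule.eq_bot_iff _).2 ?_
  rintro p ⟨hfp, hp⟩
  obtain ⟨a, rfl⟩ := Ideal.mem_span_singleton.1 hfp
  rw [← homogeneousComponent_eq_self hp, homogeneousComponent_mul_of_isHomogeneous hf,
    if_neg hnd.not_ge]

theorem degreePart_span_pair (hf : f.IsHomogeneous d) (hg : g.IsHomogeneous e) (n : ℕ) :
    degreePart (Ideal.span {f, g}) n =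
      degreePart (Ideal.span {f}) n ⊔ degreePart (Ideal.span {g}) n := by
  have component_mem {u : MvPolynomial σ R} {k : ℕ} (hu : u.IsHomogeneous k)
      (a : MvPolynomial σ R) : homogeneousComponent n (a * u) ∈ degreePart (Ideal.span {u}) n := by
    refine ⟨?_, homogeneousComponent_mem n _⟩
    rw [mul_comm, homogeneousComponent_mul_of_isHomogeneous hu]
    split_ifs
    · exact Ideal.mem_span_singleton.2 (dvd_mul_right u _)
    · exact Submodule.zero_mem _
  apply le_antisymm
  · rintro p ⟨hfgp, hp⟩
    obtain ⟨a, b, rfl⟩ := Ideal.mem_span_pair.1 hfgp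
    rw [← homogeneousComponent_eq_self hp, map_add]
    exact Submodule.add_mem_sup (component_mem hf a) (component_mem hg b)
  · exact sup_le (inf_le_inf_right _ (Ideal.span_mono (by simp)))
      (inf_le_inf_right _ (Ideal.span_mono (by simp)))

end Principal

variable {F : Type*} [Field F] {f g : MvPolynomial (Fin 2) F} {d e n : ℕ}

theorem finrank_homogeneousSubmodule_fin_two (n : ℕ) :
    Module.finrank F (homogeneousSubmodule (Fin 2) F n) = n + 1 := by
  rw [finrank_homogeneousSubmodule, Fintype.card_fin, Nat.multichoose_two]

theorem finrank_degreePart_span_singleton (hf : f.IsHomogeneous d) (hf0 : f ≠ 0) (n : ℕ) :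
    Module.finrank F (degreePart (Ideal.span {f}) n) = n + 1 - d := by
  obtain hdn | hnd := le_or_gt d n
  · have hinj : Function.Injective (LinearMap.mulLeft F f) := mul_right_injective₀ hf0
    rw [degreePart_span_singleton_eq_map hf hdn,
      ← (Submodule.equivMapOfInjective _ hinj _).finrank_eq,
      finrank_homogeneousSubmodule_fin_two]
    omega
  · rw [degreePart_span_singleton_eq_bot hf hnd, finrank_bot]
    omega

theorem degreePart_span_singleton_inf (hfg : IsRelPrime f g) (n : ℕ) :
    degreePart (Ideal.span {f}) n ⊓ degreePart (Ideal.span {g}) n =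
      degreePart (Ideal.span {f * g}) n := by
  ext p
  simp only [degreePart, Submodule.mem_inf, Submodule.restrictScalars_mem,
    Ideal.mem_span_singleton]
  exact ⟨fun ⟨⟨hf, hp⟩, hg, _⟩ => ⟨hfg.mul_dvd hf hg, hp⟩,
    fun ⟨h, hp⟩ => ⟨⟨dvd_of_mul_right_dvd h, hp⟩, dvd_of_mul_left_dvd h, hp⟩⟩

theorem pow_idealOfVars_le_span_pair (hf : f.IsHomogeneous d) (hf0 : f ≠ 0)
    (hg : g.IsHomogeneous e) (hg0 : g ≠ 0) (hfg : IsRelPrime f g) :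
    idealOfVars (Fin 2) F ^ (d + e - 1) ≤ Ideal.span {f, g} := by
  refine pow_idealOfVars_le_of_forall_isHomogeneous fun p hp => ?_
  set n := d + e - 1
  have hdim := Submodule.finrank_sup_add_finrank_inf_eq
    (degreePart (Ideal.span {f}) n) (degreePart (Ideal.span {g}) n)
  rw [degreePart_span_singleton_inf hfg, ← degreePart_span_pair hf hg,
    finrank_degreePart_span_singleton hf hf0, finrank_degreePart_span_singleton hg hg0,
    finrank_degreePart_span_singleton (hf.mul hg) (mul_ne_zero hf0 hg0)] at hdim
  have hall : degreePart (Ideal.span {f, g}) n = homogeneousSubmodule (Fin 2) F n :=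
    Submodule.eq_of_le_of_finrank_le inf_le_right
      (by rw [finrank_homogeneousSubmodule_fin_two]; omega)
  exact (hall.ge hp).1

theorem exists_isHomogeneous_notMem_span_pair (hd : 0 < d) (he : 0 < e) (hf : f.IsHomogeneous d)
    (hf0 : f ≠ 0) (hg : g.IsHomogeneous e) (hg0 : g ≠ 0) :
    ∃ p ∈ homogeneousSubmodule (Fin 2) F (d + e - 2), p ∉ Ideal.span {f, g} := by
  by_contra! hall
  have hle : homogeneousSubmodule (Fin 2) F (d + e - 2) ≤
      degreePart (Ideal.span {f}) (d + e - 2) ⊔ degreePart (Ideal.span {g}) (d + e - 2) :=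
    degreePart_span_pair hf hg _ ▸ fun p hp => ⟨hall p hp, hp⟩
  have hdim := (Submodule.finrank_mono hle).trans (Submodule.finrank_add_le_finrank_add_finrank _ _)
  rw [finrank_homogeneousSubmodule_fin_two, finrank_degreePart_span_singleton hf hf0,
    finrank_degreePart_span_singleton hg hg0] at hdim
  omega

end DegreePart

section GCD

variable {F : Type*} [Field F] {d : ℕ}

/-- Prime avoidance: over an infinite field `V` is not the union of the proper subspaces `V ∩ (p)`,
`p` running over the finitely many prime factors of `f`. -/
theorem exists_mem_isRelPrime [Infinite F] {R : Type*} [CommRing R] [IsDomain R]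
    [UniqueFactorizationMonoid R] [Algebra F R] {V : Submodule F R}
    (hV : ∀ h : R, (∀ v ∈ V, h ∣ v) → IsUnit h) {f : R} (hf0 : f ≠ 0) :
    ∃ g ∈ V, IsRelPrime f g := by
  classical
  let multiples (p : R) : Submodule F V := ((Ideal.span {p}).restrictScalars F).comap V.subtype
  have multiples_ne_top : ⊤ ∉ (UniqueFactorizationMonoid.factors f).toFinset.image multiples := by
    simp only [Finset.mem_image, Multiset.mem_toFinset, not_exists, not_and]
    intro p hp htop
    refine (UniqueFactorizationMonoid.irreducible_of_factor p hp).not_isUnit (hV p fun v hv => ?_)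
    exact Ideal.mem_span_singleton.1 (htop.ge (Submodule.mem_top (x := (⟨v, hv⟩ : V))))
  obtain ⟨g, hg⟩ := (Set.ne_univ_iff_exists_notMem _).1
    (Subspace.biUnion_ne_univ_of_top_notMem multiples_ne_top)
  refine ⟨g, g.2, WfDvdMonoid.isRelPrime_of_no_irreducible_factors (fun h => hf0 h.1) ?_⟩
  intro q hq hqf hqg
  obtain ⟨p, hp, hqp⟩ := UniqueFactorizationMonoid.exists_mem_factors_of_dvd hf0 hq hqf
  refine hg (Set.mem_iUnion₂.2 ⟨multiples p, ?_, ?_⟩)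
  · exact Finset.mem_image_of_mem _ (Multiset.mem_toFinset.2 hp)
  · exact Ideal.mem_span_singleton.2 (hqp.symm.dvd.trans hqg)

theorem pow_idealOfVars_le_span [Infinite F] {V : Submodule F (MvPolynomial (Fin 2) F)}
    (hVd : V ≤ homogeneousSubmodule (Fin 2) F d)
    (hV : ∀ h : MvPolynomial (Fin 2) F, (∀ v ∈ V, h ∣ v) → IsUnit h) :
    idealOfVars (Fin 2) F ^ (d + d - 1) ≤ Ideal.span (V : Set (MvPolynomial (Fin 2) F)) := by
  obtain ⟨f, hfV, hf0⟩ : ∃ f ∈ V, f ≠ 0 := by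
    by_contra! h0
    exact not_isUnit_zero (hV 0 fun v hv => (h0 v hv).symm ▸ dvd_rfl)
  obtain ⟨g, hgV, hfg⟩ := exists_mem_isRelPrime hV hf0
  obtain rfl | hg0 := eq_or_ne g 0
  · rw [Ideal.eq_top_of_isUnit_mem _ (Ideal.subset_span hfV) (isRelPrime_zero_right.1 hfg)]
    exact le_top
  · exact (pow_idealOfVars_le_span_pair (hVd hfV) hf0 (hVd hgV) hg0 hfg).trans
      (Ideal.span_mono (Set.pair_subset hfV hgV))

theorem exists_isGCDOf {V : Submodule F (MvPolynomial (Fin 2) F)} (hV : V.FG) :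
    ∃ g, IsGCDOf g (V : Set (MvPolynomial (Fin 2) F)) := by
  classical
  obtain ⟨s, rfl⟩ := hV
  let _ := UniqueFactorizationMonoid.strongNormalizationMonoid (α := MvPolynomial (Fin 2) F)
  let _ := UniqueFactorizationMonoid.toNormalizedGCDMonoid (MvPolynomial (Fin 2) F)
  refine ⟨s.gcd id, fun v hv => ?_, fun h hh =>
    Finset.dvd_gcd fun b hb => hh b (Submodule.subset_span hb)⟩
  suffices Submodule.span F s ≤ (Ideal.span {s.gcd id}).restrictScalars F from
    Ideal.mem_span_singleton.1 (this hv)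
  exact Submodule.span_le.2 fun v hv => Ideal.mem_span_singleton.2 (Finset.gcd_dvd hv)

namespace IsGCDOf

variable {V V' : Submodule F (MvPolynomial (Fin 2) F)} {f g : MvPolynomial (Fin 2) F}

theorem isHomogeneous (hg : IsGCDOf g V) (hVd : V ≤ homogeneousSubmodule (Fin 2) F d) :
    g.IsHomogeneous g.totalDegree := by
  obtain rfl | hg0 := eq_or_ne g 0
  · exact isHomogeneous_zero _ _ _
  obtain ⟨v, hv, hv0⟩ : ∃ v ∈ V, v ≠ 0 := by
    by_contra! h0
    exact hg0 (zero_dvd_iff.1 (hg.2 0 fun v hv => (h0 v hv).symm ▸ dvd_rfl))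
  exact isHomogeneous_of_dvd (hVd hv) hv0 (hg.1 v hv)

/-- After dividing by its gcd `g`, a space of forms generates an `𝔪`-primary ideal. -/
theorem exists_mul_pow_idealOfVars_le [Infinite F] (hg : IsGCDOf g V) (hg0 : g ≠ 0)
    (hVd : V ≤ homogeneousSubmodule (Fin 2) F d) :
    ∃ N, Ideal.span {g} * idealOfVars (Fin 2) F ^ N ≤
      Ideal.span (V : Set (MvPolynomial (Fin 2) F)) := by
  set U := V.comap (LinearMap.mulLeft F g)
  have hUd : U ≤ homogeneousSubmodule (Fin 2) F (d - g.totalDegree) := fun u hu =>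
    isHomogeneous_of_mul_left (hg.isHomogeneous hVd) hg0 (hVd hu)
  have hU (h : MvPolynomial (Fin 2) F) (hh : ∀ u ∈ U, h ∣ u) : IsUnit h := by
    have hgh : g * h ∣ g * 1 := by
      rw [mul_one]
      refine hg.2 _ fun v hv => ?_
      obtain ⟨u, rfl⟩ := hg.1 v hv
      exact mul_dvd_mul_left g (hh u hv)
    exact isUnit_of_dvd_one ((mul_dvd_mul_iff_left hg0).1 hgh)
  refine ⟨_, (Ideal.mul_mono_right (pow_idealOfVars_le_span hUd hU)).trans ?_⟩
  rw [Ideal.span_mul_span', Ideal.span_le]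
  rintro _ ⟨_, rfl, u, hu, rfl⟩
  exact Ideal.subset_span hu

theorem span_le_span_pair (hg : IsGCDOf g V') (hV : V ≤ V' ⊔ Submodule.span F {f}) :
    Ideal.span (V : Set (MvPolynomial (Fin 2) F)) ≤ Ideal.span {f, g} := by
  suffices V' ⊔ Submodule.span F {f} ≤ (Ideal.span {f, g}).restrictScalars F from
    Ideal.span_le.2 (hV.trans this)
  refine sup_le (fun v hv => ?_) ((Submodule.span_singleton_le_iff_mem _ _).2 ?_)
  · exact Ideal.mem_of_dvd _ (hg.1 v hv) (Ideal.subset_span (by simp))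
  · exact Ideal.subset_span (by simp)

theorem isRelPrime (hg : IsGCDOf g V') (hV : V ≤ V' ⊔ Submodule.span F {f})
    (hgcd : ∀ h : MvPolynomial (Fin 2) F, (∀ v ∈ V, h ∣ v) → IsUnit h) : IsRelPrime f g := by
  intro h hf hh
  refine hgcd h fun v hv => Ideal.mem_span_singleton.1 ?_
  refine Ideal.span_le.2 ?_ (hg.span_le_span_pair hV (Ideal.subset_span hv))
  exact Set.pair_subset (Ideal.mem_span_singleton.2 hf) (Ideal.mem_span_singleton.2 hh)

end IsGCDOf

end GCD

section Hyperplanes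

theorem sup_span_singleton_eq_of_finrank_add_one {K M : Type*} [DivisionRing K] [AddCommGroup M]
    [Module K M] {V V' : Submodule K M} [Module.Finite K V] (hle : V' ≤ V)
    (hrank : Module.finrank K V' + 1 = Module.finrank K V) {f : M} (hfV : f ∈ V) (hfV' : f ∉ V') :
    V' ⊔ Submodule.span K {f} = V := by
  have hsup : V' ⊔ Submodule.span K {f} ≤ V :=
    sup_le hle ((Submodule.span_singleton_le_iff_mem _ _).2 hfV)
  have : Module.Finite K ↥(V' ⊔ Submodule.span K {f}) := Submodule.finiteDimensional_of_le hsup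
  have hlt : V' < V' ⊔ Submodule.span K {f} :=
    left_lt_sup.2 fun h => hfV' ((Submodule.span_singleton_le_iff_mem _ _).1 h)
  exact Submodule.eq_of_le_of_finrank_le hsup
    (hrank ▸ Nat.succ_le_of_lt (Submodule.finrank_lt_finrank_of_lt hlt))

variable {F : Type*} [Field F] {d : ℕ} {V : Submodule F (MvPolynomial (Fin 2) F)}

/-- The degrees of the greatest common divisors of the subspaces of codimension one in `V`. The
paper's `r` is the maximum of this set. -/
def hyperplaneGCDDegrees (V : Submodule F (MvPolynomial (Fin 2) F)) : Set ℕ :=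
  {ρ : ℕ | ∃ V' : Submodule F (MvPolynomial (Fin 2) F), V' ≤ V ∧
    Module.finrank F V' + 1 = Module.finrank F V ∧
    ∃ g : MvPolynomial (Fin 2) F,
      IsGCDOf g (V' : Set (MvPolynomial (Fin 2) F)) ∧ g.totalDegree = ρ}

theorem exists_isGCDOf_map_ker (hd : 0 < d) (hVd : V ≤ homogeneousSubmodule (Fin 2) F d)
    (hgcd : ∀ h : MvPolynomial (Fin 2) F, (∀ v ∈ V, h ∣ v) → IsUnit h)
    {ψ : V →ₗ[F] F} {f : V} (hf : ψ f ≠ 0) :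
    ∃ g, IsGCDOf g ((LinearMap.ker ψ).map V.subtype) ∧ g ≠ 0 ∧ IsRelPrime f.1 g ∧
      g.totalDegree ∈ hyperplaneGCDDegrees V := by
  have : Module.Finite F V := Submodule.finiteDimensional_of_le hVd
  set V' := (LinearMap.ker ψ).map V.subtype
  have hV'V : V' ≤ V := Submodule.map_subtype_le _ _
  have hrank : Module.finrank F V' + 1 = Module.finrank F V := by
    rw [Submodule.finrank_map_subtype_eq]
    exact Module.Dual.finrank_ker_add_one_of_ne_zero (ne_of_apply_ne (· f) hf)
  have hfV' : f.1 ∉ V' := by simpa [V'] using hf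
  have hV := sup_span_singleton_eq_of_finrank_add_one hV'V hrank f.2 hfV'
  obtain ⟨g, hg⟩ := exists_isGCDOf (Module.Finite.iff_fg.1 (Submodule.finiteDimensional_of_le hV'V))
  have hfg := hg.isRelPrime hV.ge hgcd
  refine ⟨g, hg, ?_, hfg, V', hV'V, hrank, g, hg, rfl⟩
  rintro rfl
  exact not_isUnit_of_isHomogeneous hd (hVd f.2) (isRelPrime_zero_right.1 hfg)

/-- The forms of `V` divisible by `x` are a hyperplane, given by the vanishing of the coefficient of
`y ^ d`. -/
theorem exists_pos_mem_hyperplaneGCDDegrees (hd : 0 < d)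
    (hVd : V ≤ homogeneousSubmodule (Fin 2) F d)
    (hgcd : ∀ h : MvPolynomial (Fin 2) F, (∀ v ∈ V, h ∣ v) → IsUnit h) :
    ∃ ρ ∈ hyperplaneGCDDegrees V, 0 < ρ := by
  let ψ : V →ₗ[F] F := lcoeff F (Finsupp.single 1 d) ∘ₗ V.subtype
  have X_dvd (v : V) (hv : ψ v = 0) : X 0 ∣ v.1 := X_dvd_of_coeff_single_eq_zero (hVd v.2) hv
  obtain ⟨f, hf⟩ : ∃ f, ψ f ≠ 0 := by
    by_contra! h0
    exact not_isUnit_of_isHomogeneous one_pos (isHomogeneous_X F 0)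
      (hgcd _ fun v hv => X_dvd ⟨v, hv⟩ (h0 _))
  obtain ⟨g, hg, hg0, -, hmem⟩ := exists_isGCDOf_map_ker hd hVd hgcd hf
  have hX : X 0 ∣ g := hg.2 _ fun v hv => by
    obtain ⟨v, hv, rfl⟩ := hv
    exact X_dvd v hv
  have hdeg := totalDegree_le_of_dvd_of_isDomain hX hg0
  rw [totalDegree_X] at hdeg
  exact ⟨_, hmem, hdeg⟩

end Hyperplanes

section Nullstellensatz

variable {F A M : Type*} [Field F] [IsAlgClosed F] [CommRing A] [Algebra F A]
  [Algebra.FiniteType F A] [AddCommGroup M] [Module A M] [Module.Finite A M]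

variable (F) in
theorem exists_algHom_ker_eq (P : Ideal A) [P.IsMaximal] : ∃ φ : A →ₐ[F] F, RingHom.ker φ = P := by
  let _ : Field (A ⧸ P) := Ideal.Quotient.field P
  have : IsJacobsonRing A := isJacobsonRing_of_finiteType (A := F)
  have : Module.Finite F (A ⧸ P) := finite_of_finite_type_of_isJacobsonRing F (A ⧸ P)
  let e : F ≃ₐ[F] A ⧸ P :=
    .ofBijective (Algebra.ofId F _) IsAlgClosed.algebraMap_bijective_of_isIntegral
  refine ⟨e.symm.toAlgHom.comp (Ideal.Quotient.mkₐ F P), Ideal.ext fun a => ?_⟩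
  change e.symm (Ideal.Quotient.mk P a) = 0 ↔ a ∈ P
  rw [EmbeddingLike.map_eq_zero_iff, Ideal.Quotient.eq_zero_iff_mem]

variable (F) in
/-- The hypothesis says that the support of `M` lies in the closed set cut out by `𝔞`, tested on
closed points. -/
theorem le_radical_annihilator {𝔞 : Ideal A}
    (h : ∀ φ : A →ₐ[F] F, ¬ 𝔞 ≤ RingHom.ker φ → RingHom.ker φ • (⊤ : Submodule A M) = ⊤) :
    𝔞 ≤ (Module.annihilator A M).radical := by
  have : IsJacobsonRing A := isJacobsonRing_of_finiteType (A := F)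
  rw [Ideal.radical_eq_jacobson]
  refine le_sInf fun P ⟨hP, hPmax⟩ => ?_
  obtain ⟨φ, rfl⟩ := exists_algHom_ker_eq F P
  by_contra h𝔞
  obtain ⟨r, hr, hr0⟩ := Submodule.exists_sub_one_mem_and_smul_eq_zero_of_fg_of_le_smul
    (RingHom.ker φ) ⊤ Module.Finite.fg_top (h φ h𝔞).ge
  have hrP : r ∈ RingHom.ker φ := hP (Module.mem_annihilator.2 fun m => hr0 m trivial)
  exact hPmax.ne_top ((Ideal.eq_top_iff_one _).2 (by simpa using Ideal.sub_mem _ hrP hr))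

variable (F) in
theorem exists_pow_smul_top_le {𝔞 : Ideal A} {K : Submodule A M}
    (h : ∀ φ : A →ₐ[F] F, ¬ 𝔞 ≤ RingHom.ker φ → K ⊔ RingHom.ker φ • ⊤ = ⊤) :
    ∃ k, 𝔞 ^ k • (⊤ : Submodule A M) ≤ K := by
  have : IsNoetherianRing A := Algebra.FiniteType.isNoetherianRing F A
  have hrad : 𝔞 ≤ (Module.annihilator A (M ⧸ K)).radical := by
    refine le_radical_annihilator F fun φ hφ => ?_
    have hmap := (Submodule.map_mkQ_eq_top K _).2 (h φ hφ)
    rwa [Submodule.map_smul'', Submodule.map_top, Submodule.range_mkQ] at hmap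
  obtain ⟨k, hk⟩ := Ideal.exists_pow_le_of_le_radical_of_fg hrad (IsNoetherian.noetherian _)
  refine ⟨k, Submodule.smul_le.2 fun a ha m _ => ?_⟩
  rw [Submodule.annihilator_quotient] at hk
  exact Submodule.mem_colon.1 (hk ha) m trivial

end Nullstellensatz

section FormAlgebra

variable {F : Type*} [Field F] {d : ℕ}

theorem finite_adjoin_of_pow_idealOfVars_le_span {σ : Type*} [Finite σ] {N : ℕ} (hd : 0 < d)
    {V : Submodule F (MvPolynomial σ F)} (hVd : V ≤ homogeneousSubmodule σ F d)
    (hN : idealOfVars σ F ^ N ≤ Ideal.span (V : Set (MvPolynomial σ F))) :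
    Module.Finite (Algebra.adjoin F (V : Set (MvPolynomial σ F))) (MvPolynomial σ F) := by
  set A := Algebra.adjoin F (V : Set (MvPolynomial σ F))
  obtain ⟨s, hs⟩ := Module.Finite.iff_fg.1
    (inferInstance : Module.Finite F (restrictTotalDegree σ F N))
  refine ⟨s, (Submodule.restrictScalars_eq_top_iff F A _).1 ?_⟩
  refine eq_top_of_forall_mul_mem (fun u hu => ⟨⟨d, hd, hVd hu⟩, fun a ha => ?_⟩) hN fun p hp => ?_
  · exact Submodule.smul_mem _ (⟨u, Algebra.subset_adjoin hu⟩ : A) ha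
  · refine Submodule.span_subset_span F A _ ?_
    rw [hs]
    exact (mem_restrictTotalDegree _ _ _).2 hp.le

theorem finiteType_adjoin_of_fg {R S : Type*} [CommSemiring R] [CommSemiring S] [Algebra R S]
    {V : Submodule R S} (hV : V.FG) : Algebra.FiniteType R (Algebra.adjoin R (V : Set S)) := by
  obtain ⟨s, rfl⟩ := hV
  rw [Algebra.adjoin_span]
  exact Algebra.FiniteType.adjoin_of_finite s.finite_toSet

theorem mem_of_smul_mem_of_ker_smul_le {A M : Type*} [CommRing A] [Algebra F A] [AddCommGroup M]
    [Module A M] {W : Submodule A M} {φ : A →ₐ[F] F} (hW : RingHom.ker φ • ⊤ ≤ W) {a : A}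
    (ha : φ a ≠ 0) {x : M} (hx : a • x ∈ W) : x ∈ W := by
  have hker : a - algebraMap F A (φ a) ∈ RingHom.ker φ := by simp
  have hsub := W.sub_mem hx (hW (Submodule.smul_mem_smul hker (Submodule.mem_top (x := x))))
  rw [← sub_smul, sub_sub_cancel] at hsub
  exact (W.smul_mem_iff_of_isUnit ((isUnit_iff_ne_zero.2 ha).map (algebraMap F A))).1 hsub

variable {V : Submodule F (MvPolynomial (Fin 2) F)}

theorem IsGCDOf.mul_mem_ker_smul_top [Infinite F] {g : MvPolynomial (Fin 2) F} (hg : IsGCDOf g V)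
    (hg0 : g ≠ 0) (hVd : V ≤ homogeneousSubmodule (Fin 2) F d)
    {A : Subalgebra F (MvPolynomial (Fin 2) F)} {φ : A →ₐ[F] F}
    (hVφ : (V : Set (MvPolynomial (Fin 2) F)) ⊆ algebraMap A _ '' (RingHom.ker φ)) {f : A} {e : ℕ}
    (he : 0 < e) (hfe : f.1.IsHomogeneous e) (hφf : φ f ≠ 0) (b : MvPolynomial (Fin 2) F) :
    g * b ∈ (RingHom.ker φ • ⊤ : Submodule A (MvPolynomial (Fin 2) F)) := by
  obtain ⟨N, hN⟩ := hg.exists_mul_pow_idealOfVars_le hg0 hVd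
  have hφN : φ (f ^ N) ≠ 0 := by
    rw [map_pow]
    exact pow_ne_zero N hφf
  have hfN : f.1 ^ N ∈ idealOfVars (Fin 2) F ^ N :=
    mem_pow_idealOfVars_of_isHomogeneous (hfe.pow N) (Nat.le_mul_of_pos_left N he)
  refine mem_of_smul_mem_of_ker_smul_le le_rfl hφN ?_
  rw [Ideal.smul_top_eq_map]
  refine Ideal.span_mono hVφ ?_
  have hgf := hN (Ideal.mul_mem_mul (Ideal.mem_span_singleton_self g) hfN)
  change f.1 ^ N * (g * b) ∈ Ideal.span _
  rw [mul_left_comm, ← mul_assoc]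
  exact Ideal.mul_mem_right b _ hgf

/-- At a point `φ` of the variety of `A = F[V]` other than the cone point, the fibre of `F[x, y]`
over `φ` is spanned by the polynomials of degree at most `r + d - 2`: with `g` the gcd of the
hyperplane `V ∩ ker φ` and `f ∈ V` outside of it, the fibre is a quotient of `F[x, y] / (g)`, on
which `f` acts as a scalar. -/
theorem sup_ker_smul_top_eq_top [Infinite F] {r : ℕ} (hd : 0 < d)
    (hVd : V ≤ homogeneousSubmodule (Fin 2) F d)
    (hgcd : ∀ h : MvPolynomial (Fin 2) F, (∀ v ∈ V, h ∣ v) → IsUnit h)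
    (hr : r ∈ upperBounds (hyperplaneGCDDegrees V))
    {A : Subalgebra F (MvPolynomial (Fin 2) F)} (hVA : V ≤ A.toSubmodule)
    {K : Submodule A (MvPolynomial (Fin 2) F)}
    (hK : ∀ p : MvPolynomial (Fin 2) F, p.totalDegree ≤ r + d - 2 → p ∈ K)
    {φ : A →ₐ[F] F} {f : V} (hf : φ (Submodule.inclusion hVA f) ≠ 0) :
    K ⊔ RingHom.ker φ • ⊤ = ⊤ := by
  let ψ : V →ₗ[F] F := φ.toLinearMap ∘ₗ Submodule.inclusion hVA
  obtain ⟨g, hg, hg0, hfg, hgr⟩ := exists_isGCDOf_map_ker (ψ := ψ) (f := f) hd hVd hgcd hf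
  have hV'd := (V.map_subtype_le (LinearMap.ker ψ)).trans hVd
  have hghom := hg.isHomogeneous hV'd
  set W := K ⊔ RingHom.ker φ • ⊤
  have g_mul_mem (b : MvPolynomial (Fin 2) F) : g * b ∈ W := by
    refine Submodule.mem_sup_right (hg.mul_mem_ker_smul_top hg0 hV'd ?_ hd (hVd f.2) hf b)
    rintro _ ⟨v, hv, rfl⟩
    exact ⟨Submodule.inclusion hVA v, hv, rfl⟩
  obtain he0 | he := Nat.eq_zero_or_pos g.totalDegree
  · refine eq_top_iff.2 fun p _ => ?_
    obtain ⟨b, rfl⟩ := (isUnit_of_totalDegree_eq_zero hg0 he0).dvd (a := p)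
    exact g_mul_mem b
  have hf0 : f.1 ≠ 0 := fun h0 => hf (by rw [ZeroMemClass.coe_eq_zero.1 h0, map_zero, map_zero])
  refine (Submodule.restrictScalars_eq_top_iff F A _).1 (eq_top_of_forall_mul_mem (G := {f.1, g}) ?_
    (pow_idealOfVars_le_span_pair (hVd f.2) hf0 hghom hg0 hfg) fun p hp => ?_)
  · rintro _ (rfl | rfl)
    · exact ⟨⟨d, hd, hVd f.2⟩, fun a ha => W.smul_mem (Submodule.inclusion hVA f) ha⟩
    · exact ⟨⟨_, he, hghom⟩, fun a _ => g_mul_mem a⟩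
  · have := hr hgr
    exact Submodule.mem_sup_left (hK p (by omega))

end FormAlgebra

section Powers

theorem span_adjoin_le_of_forall_mul_mem {R A : Type*} [CommSemiring R] [CommSemiring A]
    [Algebra R A] {s T : Set A} {D : Submodule R A} (hs : ∀ v ∈ s, ∀ q ∈ D, v * q ∈ D)
    (hT : T ⊆ D) : (Submodule.span (Algebra.adjoin R s) T).restrictScalars R ≤ D := by
  have adjoin_mul_mem (a : A) (ha : a ∈ Algebra.adjoin R s) : ∀ q ∈ D, a * q ∈ D := by
    induction ha using Algebra.adjoin_induction with
    | mem v hv => exact hs v hv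
    | algebraMap c => exact fun q hq => Algebra.smul_def c q ▸ D.smul_mem c hq
    | add a b _ _ ha hb => exact fun q hq => add_mul a b q ▸ D.add_mem (ha q hq) (hb q hq)
    | mul a b _ _ ha hb => exact fun q hq => mul_assoc a b q ▸ ha _ (hb q hq)
  intro q hq
  induction hq using Submodule.span_induction with
  | mem q hq => exact hT hq
  | zero => exact D.zero_mem
  | add p q _ _ hp hq => exact D.add_mem hp hq
  | smul a q _ hq => exact adjoin_mul_mem a a.2 q hq

/-- Multiplication by an element of `V` raises the degree by `d` and the exponent of the ideal by
one, so the condition on `k` and `t` is invariant. -/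
theorem homogeneousComponent_mem_pow_span {σ R : Type*} [CommSemiring R] {d m : ℕ}
    {V : Submodule R (MvPolynomial σ R)} (hVd : V ≤ homogeneousSubmodule σ R d)
    {q : MvPolynomial σ R} (hq : q ∈ Submodule.span (Algebra.adjoin R (V : Set (MvPolynomial σ R)))
      {p : MvPolynomial σ R | p.totalDegree ≤ m}) {k t : ℕ} (hkt : d * t + m < k + d) :
    homogeneousComponent k q ∈ Ideal.span (V : Set (MvPolynomial σ R)) ^ t := by
  set I := Ideal.span (V : Set (MvPolynomial σ R))
  let D : Submodule R (MvPolynomial σ R) :=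
    ⨅ (k : ℕ) (t : ℕ) (_ : d * t + m < k + d),
      ((I ^ t).restrictScalars R).comap (homogeneousComponent k)
  have mem_D (q : MvPolynomial σ R) :
      q ∈ D ↔ ∀ k t, d * t + m < k + d → homogeneousComponent k q ∈ I ^ t := by
    simp [D, Submodule.mem_iInf]
  have zero_pow_mem (p : MvPolynomial σ R) : p ∈ I ^ 0 := by simp
  suffices q ∈ D from (mem_D q).1 this k t hkt
  refine span_adjoin_le_of_forall_mul_mem (fun v hv q hq => ?_) (fun p hp => ?_) hq
  · refine (mem_D _).2 fun k t hkt => ?_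
    rw [homogeneousComponent_mul_of_isHomogeneous (hVd hv)]
    split_ifs with hdk
    · cases t with
      | zero => exact zero_pow_mem _
      | succ t =>
        rw [pow_succ']
        refine Ideal.mul_mem_mul (Ideal.subset_span hv) ((mem_D q).1 hq _ _ ?_)
        rw [mul_add_one] at hkt
        omega
    · exact Ideal.zero_mem _
  · refine (mem_D _).2 fun k t hkt => ?_
    cases t with
    | zero => exact zero_pow_mem _
    | succ t =>
      have hpm : p.totalDegree ≤ m := hp
      rw [homogeneousComponent_eq_zero _ _ (by rw [mul_add_one] at hkt; omega)]
      exact Ideal.zero_mem _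

theorem pow_le_span_pow_pair {R : Type*} [CommSemiring R] {I : Ideal R} {f g : R}
    (h : I ≤ Ideal.span {f, g}) (t : ℕ) : I ^ t ≤ Ideal.span {f ^ t, g} := by
  induction t with
  | zero =>
    rw [Ideal.eq_top_of_isUnit_mem (Ideal.span {f ^ 0, g}) (Ideal.subset_span (by simp)) isUnit_one]
    exact le_top
  | succ t ih =>
    rw [pow_succ, Ideal.mul_le]
    intro x hx y hy
    obtain ⟨a, b, rfl⟩ := Ideal.mem_span_pair.1 (ih hx)
    obtain ⟨a', b', rfl⟩ := Ideal.mem_span_pair.1 (h hy)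
    exact Ideal.mem_span_pair.2 ⟨a * a', a * f ^ t * b' + b * (a' * f + b' * g), by ring⟩

end Powers

section Regularity

variable {F : Type*} [Field F] {d r : ℕ} {V : Submodule F (MvPolynomial (Fin 2) F)}

theorem exists_pow_span_le_span_adjoin [IsAlgClosed F] (hd : 0 < d)
    (hVd : V ≤ homogeneousSubmodule (Fin 2) F d)
    (hgcd : ∀ h : MvPolynomial (Fin 2) F, (∀ v ∈ V, h ∣ v) → IsUnit h)
    (hr : r ∈ upperBounds (hyperplaneGCDDegrees V)) :
    ∃ k, ∀ p ∈ Ideal.span (V : Set (MvPolynomial (Fin 2) F)) ^ k,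
      p ∈ Submodule.span (Algebra.adjoin F (V : Set (MvPolynomial (Fin 2) F)))
        {p : MvPolynomial (Fin 2) F | p.totalDegree ≤ r + d - 2} := by
  set A := Algebra.adjoin F (V : Set (MvPolynomial (Fin 2) F))
  have hVA : V ≤ A.toSubmodule := Algebra.subset_adjoin
  have : Algebra.FiniteType F A := finiteType_adjoin_of_fg
    (Module.Finite.iff_fg.1 (Submodule.finiteDimensional_of_le hVd))
  have : Module.Finite A (MvPolynomial (Fin 2) F) :=
    finite_adjoin_of_pow_idealOfVars_le_span hd hVd (pow_idealOfVars_le_span hVd hgcd)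
  set K := Submodule.span A {p : MvPolynomial (Fin 2) F | p.totalDegree ≤ r + d - 2}
  let irrelevant : Ideal A := Ideal.span (Set.range (Submodule.inclusion hVA))
  obtain ⟨k, hk⟩ : ∃ k, irrelevant ^ k • ⊤ ≤ K := by
    refine exists_pow_smul_top_le F fun φ hφ => ?_
    obtain ⟨f, hf⟩ : ∃ f, φ (Submodule.inclusion hVA f) ≠ 0 := by
      by_contra! h0
      exact hφ (Ideal.span_le.2 (Set.range_subset_iff.2 h0))
    exact sup_ker_smul_top_eq_top hd hVd hgcd hr hVA (fun p hp => Submodule.subset_span hp) hf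
  have map_irrelevant : irrelevant.map (algebraMap A (MvPolynomial (Fin 2) F)) =
      Ideal.span (V : Set (MvPolynomial (Fin 2) F)) := by
    rw [Ideal.map_span, ← Set.range_comp]
    exact congrArg Ideal.span Subtype.range_coe
  refine ⟨k, fun p hp => hk ?_⟩
  rwa [Ideal.smul_top_eq_map, Ideal.map_pow, map_irrelevant]

theorem exists_forall_pow_idealOfVars_le_pow_span [IsAlgClosed F] (hd : 0 < d) (hr0 : 0 < r)
    (hVd : V ≤ homogeneousSubmodule (Fin 2) F d)
    (hgcd : ∀ h : MvPolynomial (Fin 2) F, (∀ v ∈ V, h ∣ v) → IsUnit h)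
    (hr : r ∈ upperBounds (hyperplaneGCDDegrees V)) :
    ∃ t₀ : ℕ, ∀ t ≥ t₀, idealOfVars (Fin 2) F ^ (d * t + r - 1) ≤
      Ideal.span (V : Set (MvPolynomial (Fin 2) F)) ^ t := by
  obtain ⟨k, hk⟩ := exists_pow_span_le_span_adjoin hd hVd hgcd hr
  refine ⟨(d + d - 1) * k, fun t ht => pow_idealOfVars_le_of_forall_isHomogeneous fun p hp => ?_⟩
  have ht' : (d + d - 1) * k ≤ d * t + r - 1 := by
    have := Nat.le_mul_of_pos_left t hd
    omega
  have hpk : p ∈ Ideal.span (V : Set (MvPolynomial (Fin 2) F)) ^ k := by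
    refine Ideal.pow_right_mono (pow_idealOfVars_le_span hVd hgcd) k ?_
    rw [← pow_mul]
    exact mem_pow_idealOfVars_of_isHomogeneous hp ht'
  rw [← homogeneousComponent_eq_self hp]
  exact homogeneousComponent_mem_pow_span hVd (hk p hpk) (by omega)

theorem exists_isHomogeneous_notMem_pow_span (hd : 0 < d) (hr0 : 0 < r)
    (hVd : V ≤ homogeneousSubmodule (Fin 2) F d) (hr : r ∈ hyperplaneGCDDegrees V) {t : ℕ}
    (ht : 0 < t) :
    ∃ p ∈ homogeneousSubmodule (Fin 2) F (d * t + r - 2),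
      p ∉ Ideal.span (V : Set (MvPolynomial (Fin 2) F)) ^ t := by
  obtain ⟨V', hV'V, hrank, g, hg, rfl⟩ := hr
  have : Module.Finite F V := Submodule.finiteDimensional_of_le hVd
  have hg0 : g ≠ 0 := by
    rintro rfl
    exact hr0.ne' totalDegree_zero
  obtain ⟨f, hfV, hfV'⟩ : ∃ f ∈ V, f ∉ V' := SetLike.exists_of_lt
    (hV'V.lt_of_ne fun h => by rw [h] at hrank; omega)
  have hf0 : f ≠ 0 := fun h => hfV' (h ▸ V'.zero_mem)
  have hsup := sup_span_singleton_eq_of_finrank_add_one hV'V hrank hfV hfV'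
  obtain ⟨p, hp, hpfg⟩ := exists_isHomogeneous_notMem_span_pair (Nat.mul_pos hd ht) hr0
    (IsHomogeneous.pow (hVd hfV) t) (pow_ne_zero t hf0)
    (hg.isHomogeneous (hV'V.trans hVd)) hg0
  exact ⟨p, hp, fun h => hpfg (pow_le_span_pow_pair (hg.span_le_span_pair hsup.ge) t h)⟩

end Regularity

/-!
STATEMENT 1: Let `F` be an algebraically closed field, `S = F[x,y]`, and let `V ⊆ S_d`
(`d ≥ 1`) be an `F`-vector space of forms of degree `d` whose greatest common divisor is `1`;
let `I ⊆ S` be the ideal generated by `V`.  For a subspace `V' ⊆ V` let `r_{V'}` be the degree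
of the greatest common divisor of the forms in `V'`, and let
`r = max { r_{V'} : V' ⊆ V a linear subspace of codimension 1 }`.
Then for all sufficiently large `t` one has `reg I^t = d*t + r - 1`; equivalently, for all
sufficiently large `t`, every form of degree at least `d*t + r - 1` lies in `I^t` (i.e.
`m^(d*t+r-1) ⊆ I^t` where `m = (x,y)`), while not every form of degree `d*t + r - 2` lies
in `I^t`.
-/
theorem stmt_1 {F : Type*} [Field F] [IsAlgClosed F] (d : ℕ) (hd : 1 ≤ d)
    (V : Submodule F (MvPolynomial (Fin 2) F))
    (hVd : V ≤ homogeneousSubmodule (Fin 2) F d)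
    (hgcd : ∀ h : MvPolynomial (Fin 2) F, (∀ v ∈ V, h ∣ v) → IsUnit h)
    (I : Ideal (MvPolynomial (Fin 2) F))
    (hI : I = Ideal.span (V : Set (MvPolynomial (Fin 2) F)))
    (r : ℕ)
    (hr : IsGreatest {ρ : ℕ | ∃ V' : Submodule F (MvPolynomial (Fin 2) F), V' ≤ V ∧
        Module.finrank F V' + 1 = Module.finrank F V ∧
        ∃ g : MvPolynomial (Fin 2) F,
          IsGCDOf g (V' : Set (MvPolynomial (Fin 2) F)) ∧ g.totalDegree = ρ} r) :
    ∃ t₀ : ℕ, ∀ t ≥ t₀,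
      (Ideal.span (Set.range (X : Fin 2 → MvPolynomial (Fin 2) F)) ^ (d * t + r - 1) ≤
          I ^ t) ∧
        ∃ p ∈ homogeneousSubmodule (Fin 2) F (d * t + r - 2), p ∉ I ^ t := by
  subst hI
  change IsGreatest (hyperplaneGCDDegrees V) r at hr
  obtain ⟨ρ, hρ, hρ0⟩ := exists_pos_mem_hyperplaneGCDDegrees hd hVd hgcd
  have hr0 : 0 < r := hρ0.trans_le (hr.2 hρ)
  obtain ⟨t₀, ht₀⟩ := exists_forall_pow_idealOfVars_le_pow_span hd hr0 hVd hgcd hr.2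
  exact ⟨t₀ + 1, fun t ht => ⟨ht₀ t (by omega),
    exists_isHomogeneous_notMem_pow_span hd hr0 hVd hr.1 (by omega)⟩⟩
end

section
/- Let S = F[x_0,…,x_n], let M be a finitely generated graded S-module generated in degree 0 which does not have finite length, and let I ⊆ S be a homogeneous ideal generated by forms of degree d such that M/IM has finite length. Write reg(M/I^tM) = dt + f_t − 1 and reg(I^tM) = dt + e_t. Then e_1 ≥ e_2 ≥ ⋯ ≥ 0, the sequence (e_t) is nonincreasing and nonnegative; moreover inf_t e_t = inf_t f_t =: e, and reg(I^tM) = dt + e for all sufficiently large t. -/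
open MvPolynomial

section KoszulRegularity

variable (F : Type*) [Field F] (N : ℕ)

/-- The Koszul differential (for the sequence `x_0, …, x_{N-1}` of variables) on
`M`-valued alternating chains, where a `p`-chain is recorded as a function on all
finite subsets of `Fin N` which vanishes on subsets of cardinality other than `p`. -/
noncomputable def koszulD {M : Type*} [AddCommGroup M]
    [Module (MvPolynomial (Fin N) F) M] (f : Finset (Fin N) → M) :
    Finset (Fin N) → M :=
  fun T => ∑ k ∈ Tᶜ, ((-1 : ℤ) ^ ((T.filter (fun j => j < k)).card)) •
    ((X k : MvPolynomial (Fin N) F) • f (insert k T))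

/-- `f` is a Koszul `p`-chain of internal degree `j` for the grading `𝓜`:
it is supported on `p`-element subsets `T`, with `f T` of degree `j - p`
(an element of `Λ^p(S^N) ⊗ M`, placed in internal degree `j`). -/
def IsKChain {M : Type*} [AddCommGroup M] [Module F M]
    (𝓜 : ℤ → Submodule F M) (p : ℕ) (j : ℤ) (f : Finset (Fin N) → M) : Prop :=
  ∀ T : Finset (Fin N), (T.card = p → f T ∈ 𝓜 (j - p)) ∧ (T.card ≠ p → f T = 0)

/-- The degree-`j` part of the `i`-th Koszul homology of `M` with respect to the variables
`x_0, …, x_{N-1}`, i.e. the degree-`j` part of `Tor_i^S(M, F)`, vanishes: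
every cycle is a boundary. -/
def torVanishes {M : Type*} [AddCommGroup M] [Module (MvPolynomial (Fin N) F) M]
    [Module F M] (𝓜 : ℤ → Submodule F M) (i : ℕ) (j : ℤ) : Prop :=
  ∀ f : Finset (Fin N) → M, IsKChain F N 𝓜 i j f → koszulD F N f = 0 →
    ∃ g : Finset (Fin N) → M, IsKChain F N 𝓜 (i + 1) j g ∧ koszulD F N g = f

/-- `r` is the Castelnuovo-Mumford regularity of the graded module `M` over
`S = F[x_0, …, x_{N-1}]`: the maximum over `i` of `t_i(M) - i`, where `t_i(M)` is the
largest degree occurring in `Tor_i^S(M, F)` (computed as Koszul homology, recording the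
degrees of the `i`-th minimal syzygies of `M`). -/
def IsRegularity {M : Type*} [AddCommGroup M] [Module (MvPolynomial (Fin N) F) M]
    [Module F M] (𝓜 : ℤ → Submodule F M) (ρ : ℤ) : Prop :=
  (∀ (i : ℕ) (j : ℤ), ¬ torVanishes F N 𝓜 i j → j - i ≤ ρ) ∧
  (∃ (i : ℕ) (j : ℤ), ¬ torVanishes F N 𝓜 i j ∧ j - i = ρ)

end KoszulRegularity

/-!
`Tor_i(M, F)` is computed by Koszul homology in the variables. If `reg L ≤ ρ`, then top Koszul
homology, which is the socle of `L`, vanishes above `ρ`, so `L` has no `𝔪`-power torsion in degrees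
above `ρ`. If moreover `L ⊆ M` agrees with `M` in large degrees, then corank-one Koszul homology,
which measures compatible families `x_k • z = y_k`, shows that in degrees at least `ρ` every element
of `M` lies in `L` up to `𝔪`-power torsion.

Apply this to `L = I^tM`, with `t ≥ 1` and `ρ = reg L`. A form `u ∈ I^{t-1}M` of degree at least `ρ`
is `y` plus torsion with `y ∈ I^tM`, and multiplication by a generator `g` of `I` moves the torsion
above `ρ`, where there is none: `g u = g y ∈ I^{t+1}M`. So `I^tM` and `I^{t+1}M` agree in degrees at
least `ρ + d`, which gives `e_{t+1} ≤ e_t`. Since `reg(I^tM) ≥ dt` eventually exceeds `reg M`,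
comparing `I^tM ⊆ M` with its quotient gives `reg(I^tM) = reg(M/I^tM) + 1`, that is `e_t = f_t`, for
large `t`; and a nonincreasing sequence of integers that is bounded below stabilises.
-/

open Filter

section Koszul

variable {F : Type*} [Field F] {M : Type*} [AddCommGroup M]

theorem card_filter_lt_add_card_compl_filter_lt {N : ℕ} (T : Finset (Fin N)) (k : Fin N) :
    (T.filter (· < k)).card + (Tᶜ.filter (· < k)).card = k := by
  rw [← Finset.card_union_of_disjoint (Finset.disjoint_filter_filter disjoint_compl_right),
    ← Finset.filter_union, Finset.union_compl, Finset.filter_gt_eq_Iio, Fin.card_Iio]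

section Differential

variable {N : ℕ} [Module (MvPolynomial (Fin N) F) M] (f : Finset (Fin N) → M)

theorem koszulD_univ : koszulD F N f Finset.univ = 0 := by
  simp [koszulD]

theorem koszulD_compl_singleton (k : Fin N) :
    koszulD F N f {k}ᶜ =
      (-1 : ℤ) ^ (k : ℕ) • (X k : MvPolynomial (Fin N) F) • f Finset.univ := by
  have hsign := card_filter_lt_add_card_compl_filter_lt {k}ᶜ k
  have hempty : ({k} : Finset (Fin N)).filter (· < k) = ∅ := by simp
  rw [compl_compl, hempty, Finset.card_empty, add_zero] at hsign
  rw [koszulD, compl_compl, Finset.sum_singleton, hsign, Finset.insert_compl_self]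

theorem koszulD_compl_pair {k l : Fin N} (hkl : k < l) :
    koszulD F N f {k, l}ᶜ =
      (-1 : ℤ) ^ (k : ℕ) • (X k : MvPolynomial (Fin N) F) • f {l}ᶜ -
        (-1 : ℤ) ^ (l : ℕ) • (X l : MvPolynomial (Fin N) F) • f {k}ᶜ := by
  have hinsert_k : insert k ({k, l} : Finset (Fin N))ᶜ = {l}ᶜ := by
    ext x
    simp only [Finset.mem_insert, Finset.mem_compl, Finset.mem_singleton]
    grind
  have hinsert_l : insert l ({k, l} : Finset (Fin N))ᶜ = {k}ᶜ := by
    ext x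
    simp only [Finset.mem_insert, Finset.mem_compl, Finset.mem_singleton]
    grind
  have hsign_k := card_filter_lt_add_card_compl_filter_lt {k, l}ᶜ k
  have hsign_l := card_filter_lt_add_card_compl_filter_lt {k, l}ᶜ l
  have hbelow_k : ({k, l} : Finset (Fin N)).filter (· < k) = ∅ := by
    grind
  have hbelow_l : ({k, l} : Finset (Fin N)).filter (· < l) = {k} := by
    grind
  rw [compl_compl, hbelow_k, Finset.card_empty, add_zero] at hsign_k
  rw [compl_compl, hbelow_l, Finset.card_singleton] at hsign_l
  rw [koszulD, compl_compl, Finset.sum_pair hkl.ne, hsign_k, hinsert_k, hinsert_l, ← hsign_l,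
    pow_succ, mul_neg_one, neg_smul, sub_neg_eq_add]

end Differential

section Vanishing

theorem torVanishes.eq_zero_of_X_smul_eq_zero {N : ℕ} [Module F M]
    [Module (MvPolynomial (Fin N) F) M] {𝓛 : ℤ → Submodule F M} {b : ℤ}
    (h : torVanishes F N 𝓛 N (b + N)) {q : M} (hq : q ∈ 𝓛 b)
    (hX : ∀ k : Fin N, (X k : MvPolynomial (Fin N) F) • q = 0) : q = 0 := by
  have hchain : IsKChain F N 𝓛 N (b + N) (Pi.single Finset.univ q) := by
    refine fun T => ⟨fun hT => ?_, fun hT => ?_⟩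
    · rwa [Finset.card_eq_iff_eq_univ T |>.mp (by rw [hT, Fintype.card_fin]), Pi.single_eq_same,
        add_sub_cancel_right]
    · refine Pi.single_eq_of_ne ?_ _
      rintro rfl
      exact hT (Finset.card_fin N)
  have hcycle : koszulD F N (Pi.single Finset.univ q) = 0 := by
    funext T
    refine Finset.sum_eq_zero fun k _ => ?_
    rcases eq_or_ne (insert k T) Finset.univ with hT | hT
    · rw [hT, Pi.single_eq_same, hX, smul_zero]
    · rw [Pi.single_eq_of_ne hT, smul_zero, smul_zero]
  obtain ⟨g, -, hg⟩ := h _ hchain hcycle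
  simpa only [koszulD_univ, Pi.single_eq_same] using (congrFun hg Finset.univ).symm

variable {n : ℕ}

/-- The Koszul `n`-chain in `n + 1` variables attached to a family `y`: its value at the complement
of `{k}` is `(-1) ^ k • y k`. It is a cycle when `x_k y_l = x_l y_k` for all `k`, `l`. -/
def corankOneChain (y : Fin (n + 1) → M) (T : Finset (Fin (n + 1))) : M :=
  if T.card = n then ∑ k ∈ Tᶜ, (-1 : ℤ) ^ (k : ℕ) • y k else 0

theorem corankOneChain_compl_singleton (y : Fin (n + 1) → M) (k : Fin (n + 1)) :
    corankOneChain y {k}ᶜ = (-1 : ℤ) ^ (k : ℕ) • y k := by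
  simp [corankOneChain, Finset.card_compl]

theorem isKChain_corankOneChain [Module F M] {𝓛 : ℤ → Submodule F M}
    {y : Fin (n + 1) → M} {b : ℤ} (hy : ∀ k, y k ∈ 𝓛 b) :
    IsKChain F (n + 1) 𝓛 n (b + n) (corankOneChain y) := by
  refine fun T => ⟨fun hT => ?_, fun hT => if_neg hT⟩
  rw [corankOneChain, if_pos hT, add_sub_cancel_right]
  exact Submodule.sum_mem _ fun k _ => zsmul_mem (hy k) _

variable [Module (MvPolynomial (Fin (n + 1)) F) M]

theorem koszulD_corankOneChain_eq_zero {y : Fin (n + 1) → M}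
    (hy : ∀ k l, (X k : MvPolynomial (Fin (n + 1)) F) • y l =
      (X l : MvPolynomial (Fin (n + 1)) F) • y k) :
    koszulD F (n + 1) (corankOneChain y) = 0 := by
  funext T
  by_cases hT : T.card + 1 = n
  · obtain ⟨k, l, hkl, rfl⟩ : ∃ k l, k < l ∧ T = {k, l}ᶜ := by
      have hcard : Tᶜ.card = 2 := by rw [Finset.card_compl, Fintype.card_fin]; omega
      obtain ⟨k, l, hne, hT⟩ := Finset.card_eq_two.mp hcard
      rw [compl_eq_comm, eq_comm] at hT
      rcases hne.lt_or_gt with hkl | hlk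
      · exact ⟨k, l, hkl, hT⟩
      · exact ⟨l, k, hlk, by rw [hT, Finset.pair_comm]⟩
    rw [koszulD_compl_pair _ hkl, corankOneChain_compl_singleton, corankOneChain_compl_singleton,
      smul_comm (X k : MvPolynomial (Fin (n + 1)) F),
      smul_comm (X l : MvPolynomial (Fin (n + 1)) F),
      smul_comm ((-1 : ℤ) ^ (l : ℕ)) ((-1 : ℤ) ^ (k : ℕ)), hy k l, sub_self, Pi.zero_apply]
  · refine Finset.sum_eq_zero fun k hk => ?_
    rw [corankOneChain, Finset.card_insert_of_notMem (Finset.mem_compl.mp hk), if_neg hT,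
      smul_zero, smul_zero]

theorem torVanishes.exists_X_smul_eq [Module F M] {𝓛 : ℤ → Submodule F M} {a : ℤ}
    (h : torVanishes F (n + 1) 𝓛 n (a + 1 + n)) {y : Fin (n + 1) → M}
    (hmem : ∀ k, y k ∈ 𝓛 (a + 1))
    (hy : ∀ k l, (X k : MvPolynomial (Fin (n + 1)) F) • y l =
      (X l : MvPolynomial (Fin (n + 1)) F) • y k) :
    ∃ z ∈ 𝓛 a, ∀ k, (X k : MvPolynomial (Fin (n + 1)) F) • z = y k := by
  obtain ⟨g, hg, hgy⟩ :=
    h _ (isKChain_corankOneChain hmem) (koszulD_corankOneChain_eq_zero hy)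
  refine ⟨g Finset.univ, ?_, fun k => ?_⟩
  · convert! (hg Finset.univ).1 (by simp) using 2
    push_cast
    ring
  · have hk := congrFun hgy {k}ᶜ
    rw [koszulD_compl_singleton, corankOneChain_compl_singleton] at hk
    exact (IsUnit.pow _ isUnit_one.neg).smul_left_cancel.mp hk

end Vanishing

section Comparison

variable [Module F M] {N : ℕ} {𝓜 𝓛 : ℤ → Submodule F M} {i : ℕ} {j : ℤ}

theorem IsKChain.mono {p : ℕ} {f : Finset (Fin N) → M} (hf : IsKChain F N 𝓜 p j f)
    (hle : 𝓜 (j - p) ≤ 𝓛 (j - p)) : IsKChain F N 𝓛 p j f :=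
  fun T => ⟨fun hT => hle ((hf T).1 hT), (hf T).2⟩

variable [Module (MvPolynomial (Fin N) F) M]

theorem torVanishes.of_le (h : torVanishes F N 𝓜 i j) (hle : 𝓛 (j - i) ≤ 𝓜 (j - i))
    (hge : 𝓜 (j - i - 1) ≤ 𝓛 (j - i - 1)) : torVanishes F N 𝓛 i j := by
  intro f hf hf0
  obtain ⟨g, hg, hgf⟩ := h f (hf.mono hle) hf0
  refine ⟨g, hg.mono ?_, hgf⟩
  rwa [Nat.cast_succ, ← sub_sub]

theorem torVanishes_of_eq_bot (h : 𝓛 (j - i) = ⊥) : torVanishes F N 𝓛 i j := by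
  intro f hf _
  have hf0 : f = 0 := by
    funext T
    by_cases hT : T.card = i
    · simpa only [h, Submodule.mem_bot, Pi.zero_apply] using (hf T).1 hT
    · exact (hf T).2 hT
  refine ⟨0, fun T => ⟨fun _ => Submodule.zero_mem _, fun _ => rfl⟩, ?_⟩
  funext T
  simp [hf0, koszulD]

end Comparison

end Koszul

section Torsion

theorem mem_torsionBySet_span_pow_succ_iff {R M : Type*} [CommSemiring R] [AddCommMonoid M]
    [Module R M] {s : Set R} {m : ℕ} {x : M} :
    x ∈ Submodule.torsionBySet R M ↑(Ideal.span s ^ (m + 1)) ↔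
      ∀ a ∈ s, a • x ∈ Submodule.torsionBySet R M ↑(Ideal.span s ^ m) := by
  simp only [Submodule.mem_torsionBySet_iff, Subtype.forall, SetLike.mem_coe, ← mul_smul]
  constructor
  · intro hx a ha b hb
    exact hx _ (pow_succ (Ideal.span s) m ▸ Ideal.mul_mem_mul hb (Ideal.subset_span ha))
  · intro hx
    suffices Ideal.span s ^ (m + 1) ≤ Ideal.torsionOf R M x from this
    rw [pow_succ, Ideal.mul_le]
    intro b hb a ha
    induction ha using Submodule.span_induction with
    | mem a ha => exact hx a ha b hb
    | zero => simp
    | add a a' _ _ iha iha' => simpa only [mul_add] using add_mem iha iha'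
    | smul c a _ iha => simpa only [smul_eq_mul, mul_left_comm b c] using Ideal.mul_mem_left _ c iha

variable (F : Type*) [Field F] (σ M : Type*) [AddCommGroup M] [Module (MvPolynomial σ F) M]

/-- The submodule `0 :_M 𝔪 ^ m` of elements killed by the `m`-th power of the ideal `𝔪` generated
by the variables. -/
noncomputable def varsTorsion (m : ℕ) : Submodule (MvPolynomial σ F) M :=
  Submodule.torsionBySet (MvPolynomial σ F) M ↑(idealOfVars σ F ^ m)

variable {F σ M}

theorem mem_varsTorsion_zero_iff {x : M} : x ∈ varsTorsion F σ M 0 ↔ x = 0 := by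
  simp [varsTorsion, Ideal.one_eq_top]

theorem mem_varsTorsion_succ_iff {m : ℕ} {x : M} :
    x ∈ varsTorsion F σ M (m + 1) ↔
      ∀ k, (X k : MvPolynomial σ F) • x ∈ varsTorsion F σ M m :=
  mem_torsionBySet_span_pow_succ_iff.trans Set.forall_mem_range

end Torsion

section Regularity

variable {F : Type*} [Field F] {M : Type*} [AddCommGroup M] [Module F M]

/-- Multiplication by a form of degree `i` maps `𝓛 j` into `𝓛 (i + j)`. Neither independence of the
`𝓛 j` nor `⨆ j, 𝓛 j = ⊤` is required, so that the gradings induced on submodules of `M` can be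
treated as families of subspaces of `M`. -/
def IsGradedFamily (σ : Type*) [Module (MvPolynomial σ F) M] (𝓛 : ℤ → Submodule F M) : Prop :=
  ∀ (i : ℕ) (j : ℤ) (p : MvPolynomial σ F) (x : M),
    p ∈ homogeneousSubmodule σ F i → x ∈ 𝓛 j → p • x ∈ 𝓛 (i + j)

theorem IsGradedFamily.smul_mem {σ : Type*} [Module (MvPolynomial σ F) M]
    {𝓛 : ℤ → Submodule F M} (h : IsGradedFamily σ 𝓛) {i : ℕ} {p : MvPolynomial σ F}
    (hp : p ∈ homogeneousSubmodule σ F i) {b : ℤ} {x : M} (hx : x ∈ 𝓛 (b - i)) :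
    p • x ∈ 𝓛 b :=
  add_sub_cancel (i : ℤ) b ▸ h i _ p x hp hx

theorem IsGradedFamily.X_smul_mem {σ : Type*} [Module (MvPolynomial σ F) M]
    {𝓛 : ℤ → Submodule F M} (h : IsGradedFamily σ 𝓛) (k : σ) {a : ℤ} {x : M} (hx : x ∈ 𝓛 a) :
    (X k : MvPolynomial σ F) • x ∈ 𝓛 (a + 1) :=
  h.smul_mem (i := 1) (isHomogeneous_X F k) (by simpa using hx)

theorem isGradedFamily_bot (σ : Type*) [Module (MvPolynomial σ F) M] :
    IsGradedFamily σ (⊥ : ℤ → Submodule F M) := by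
  intro i j p x _ hx
  rw [Pi.bot_apply, Submodule.mem_bot] at hx ⊢
  rw [hx, smul_zero]

variable (F) in
/-- The Castelnuovo–Mumford regularity is at most `ρ`: `Tor_i(M, F)_j = 0` whenever `j - i > ρ`.
Unlike `IsRegularity`, this holds for the zero module. -/
def RegularityLE (N : ℕ) [Module (MvPolynomial (Fin N) F) M] (𝓛 : ℤ → Submodule F M) (ρ : ℤ) :
    Prop :=
  ∀ (i : ℕ) (j : ℤ), ρ < j - i → torVanishes F N 𝓛 i j

section AnyNumberOfVariables

variable {N : ℕ} [Module (MvPolynomial (Fin N) F) M] {𝓜 𝓛 : ℤ → Submodule F M} {ρ ρ' a : ℤ}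

theorem IsRegularity.regularityLE (h : IsRegularity F N 𝓛 ρ) : RegularityLE F N 𝓛 ρ :=
  fun i j hij => not_not.mp fun hTor => (h.1 i j hTor).not_gt hij

theorem IsRegularity.le_of_regularityLE (h : IsRegularity F N 𝓛 ρ) (h' : RegularityLE F N 𝓛 ρ') :
    ρ ≤ ρ' := by
  obtain ⟨i, j, hTor, rfl⟩ := h.2
  exact not_lt.mp fun hij => hTor (h' i j hij)

theorem IsRegularity.ne_bot (h : IsRegularity F N 𝓛 ρ) : 𝓛 ρ ≠ ⊥ := by
  obtain ⟨i, j, hTor, rfl⟩ := h.2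
  exact fun hbot => hTor (torVanishes_of_eq_bot hbot)

theorem regularityLE_bot (ρ : ℤ) : RegularityLE F N (⊥ : ℤ → Submodule F M) ρ :=
  fun _ _ _ => torVanishes_of_eq_bot rfl

theorem RegularityLE.of_le (h : RegularityLE F N 𝓜 ρ) (hle : 𝓛 ≤ 𝓜) (hρ : ρ ≤ ρ')
    (hge : ∀ b, ρ' ≤ b → 𝓜 b ≤ 𝓛 b) : RegularityLE F N 𝓛 ρ' :=
  fun i j hij => (h i j (by omega)).of_le (hle _) (hge _ (by omega))

theorem RegularityLE.of_ge (h : RegularityLE F N 𝓛 ρ) (hle : 𝓛 ≤ 𝓜) (hρ : ρ ≤ ρ')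
    (hge : ∀ b, ρ' < b → 𝓜 b ≤ 𝓛 b) : RegularityLE F N 𝓜 ρ' :=
  fun i j hij => (h i j (by omega)).of_le (hge _ hij) (hle _)

theorem IsRegularity.le_of_forall_lt_eq_bot (h : IsRegularity F N 𝓛 ρ)
    (hbelow : ∀ b < a, 𝓛 b = ⊥) : a ≤ ρ :=
  not_lt.mp fun hρ => h.ne_bot (hbelow ρ hρ)

theorem RegularityLE.eq_zero_of_mem_varsTorsion (h : RegularityLE F N 𝓛 ρ)
    (h𝓛 : IsGradedFamily (Fin N) 𝓛) {m : ℕ} (ha : ρ < a) {x : M} (hx : x ∈ 𝓛 a)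
    (htors : x ∈ varsTorsion F (Fin N) M m) : x = 0 := by
  induction m generalizing a x with
  | zero => exact mem_varsTorsion_zero_iff.mp htors
  | succ m ih =>
    rw [mem_varsTorsion_succ_iff] at htors
    exact (h N (a + N) (by omega)).eq_zero_of_X_smul_eq_zero hx fun k =>
      ih (by omega) (h𝓛.X_smul_mem k hx) (htors k)

end AnyNumberOfVariables

section PositiveNumberOfVariables

variable {n : ℕ} [Module (MvPolynomial (Fin (n + 1)) F) M] {𝓜 𝓛 : ℤ → Submodule F M} {r ρ a : ℤ}

theorem RegularityLE.exists_sub_mem_varsTorsion (h : RegularityLE F (n + 1) 𝓛 ρ)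
    (h𝓜 : IsGradedFamily (Fin (n + 1)) 𝓜) (h𝓛 : IsGradedFamily (Fin (n + 1)) 𝓛) (ha : ρ ≤ a)
    {m : ℕ} (hge : 𝓜 (a + m) ≤ 𝓛 (a + m)) {x : M} (hx : x ∈ 𝓜 a) :
    ∃ y ∈ 𝓛 a, x - y ∈ varsTorsion F (Fin (n + 1)) M m := by
  induction m generalizing a x with
  | zero =>
    rw [Nat.cast_zero, add_zero] at hge
    exact ⟨x, hge hx, by rw [sub_self]; exact Submodule.zero_mem _⟩
  | succ m ih =>
    have hlift : ∀ k, ∃ y ∈ 𝓛 (a + 1), (X k : MvPolynomial (Fin (n + 1)) F) • x - y ∈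
        varsTorsion F (Fin (n + 1)) M m := fun k =>
      ih (by omega) (by rwa [add_right_comm, add_assoc, ← Nat.cast_succ]) (h𝓜.X_smul_mem k hx)
    choose y hy hxy using hlift
    have hcompat : ∀ k l, (X k : MvPolynomial (Fin (n + 1)) F) • y l =
        (X l : MvPolynomial (Fin (n + 1)) F) • y k := by
      intro k l
      have hsub : (X k : MvPolynomial (Fin (n + 1)) F) • y l -
            (X l : MvPolynomial (Fin (n + 1)) F) • y k =
          (X l : MvPolynomial (Fin (n + 1)) F) •
              ((X k : MvPolynomial (Fin (n + 1)) F) • x - y k) -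
            (X k : MvPolynomial (Fin (n + 1)) F) •
              ((X l : MvPolynomial (Fin (n + 1)) F) • x - y l) := by
        rw [smul_sub, smul_sub, smul_comm (X l : MvPolynomial (Fin (n + 1)) F) _ x]
        abel
      refine sub_eq_zero.mp (h.eq_zero_of_mem_varsTorsion h𝓛 (a := a + 1 + 1) (m := m) (by omega)
        (sub_mem (h𝓛.X_smul_mem k (hy l)) (h𝓛.X_smul_mem l (hy k))) ?_)
      rw [hsub]
      exact sub_mem (Submodule.smul_mem _ _ (hxy k)) (Submodule.smul_mem _ _ (hxy l))
    obtain ⟨z, hz, hXz⟩ := (h n (a + 1 + n) (by omega)).exists_X_smul_eq hy hcompat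
    refine ⟨z, hz, mem_varsTorsion_succ_iff.mpr fun k => ?_⟩
    rw [smul_sub, hXz]
    exact hxy k

theorem RegularityLE.exists_sub_mem_varsTorsion_of_eventually_le
    (h : RegularityLE F (n + 1) 𝓛 ρ) (h𝓜 : IsGradedFamily (Fin (n + 1)) 𝓜)
    (h𝓛 : IsGradedFamily (Fin (n + 1)) 𝓛) (hge : ∀ᶠ j in atTop, 𝓜 j ≤ 𝓛 j) (ha : ρ ≤ a) {x : M}
    (hx : x ∈ 𝓜 a) : ∃ m, ∃ y ∈ 𝓛 a, x - y ∈ varsTorsion F (Fin (n + 1)) M m := by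
  obtain ⟨A, hA⟩ := eventually_atTop.mp hge
  exact ⟨(A - a).toNat, h.exists_sub_mem_varsTorsion h𝓜 h𝓛 ha (hA _ (by omega)) hx⟩

theorem RegularityLE.le_of_eventually_le (h𝓜reg : RegularityLE F (n + 1) 𝓜 r)
    (h𝓛reg : RegularityLE F (n + 1) 𝓛 ρ) (h𝓜 : IsGradedFamily (Fin (n + 1)) 𝓜)
    (h𝓛 : IsGradedFamily (Fin (n + 1)) 𝓛) (hle : 𝓛 ≤ 𝓜) (hge : ∀ᶠ j in atTop, 𝓜 j ≤ 𝓛 j)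
    (hr : r < a) (hρ : ρ ≤ a) : 𝓜 a ≤ 𝓛 a := by
  intro x hx
  obtain ⟨m, y, hy, hxy⟩ :=
    h𝓛reg.exists_sub_mem_varsTorsion_of_eventually_le h𝓜 h𝓛 hge hρ hx
  have hxy0 : x - y = 0 := h𝓜reg.eq_zero_of_mem_varsTorsion h𝓜 hr (sub_mem hx (hle a hy)) hxy
  rwa [sub_eq_zero.mp hxy0]

theorem RegularityLE.eq_bot_of_eventually_eq_bot (h : RegularityLE F (n + 1) 𝓛 ρ)
    (h𝓛 : IsGradedFamily (Fin (n + 1)) 𝓛) (hbot : ∀ᶠ j in atTop, 𝓛 j = ⊥) (ha : ρ < a) :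
    𝓛 a = ⊥ :=
  le_bot_iff.mp (h.le_of_eventually_le (regularityLE_bot ρ) h𝓛 (isGradedFamily_bot _) bot_le
    (hbot.mono fun _ hj => hj.le) ha ha.le)

end PositiveNumberOfVariables

end Regularity

section GradedModule

variable {F : Type*} [Field F] {σ : Type*} {M : Type*} [AddCommGroup M]
  [Module (MvPolynomial σ F) M] [Module F M]

section Decomposition

variable {𝓜 : ℤ → Submodule F M} [DirectSum.Decomposition 𝓜]

theorem IsGradedFamily.decompose_smul (h𝓜 : IsGradedFamily σ 𝓜) {i : ℕ} {p : MvPolynomial σ F}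
    (hp : p ∈ homogeneousSubmodule σ F i) (x : M) (b : ℤ) :
    (DirectSum.decompose 𝓜 (p • x) b : M) = p • (DirectSum.decompose 𝓜 x (b - i) : M) := by
  induction x using DirectSum.Decomposition.inductionOn 𝓜 with
  | zero => simp
  | add x y hx hy => simp [hx, hy, smul_add]
  | homogeneous x =>
    rename_i j
    have hpx : p • (x : M) ∈ 𝓜 (i + j) := h𝓜 i j p x hp x.2
    by_cases hb : i + j = b
    · subst hb
      rw [DirectSum.decompose_of_mem_same 𝓜 hpx, add_sub_cancel_left,
        DirectSum.decompose_of_mem_same 𝓜 x.2]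
    · rw [DirectSum.decompose_of_mem_ne 𝓜 hpx hb,
        DirectSum.decompose_of_mem_ne 𝓜 x.2 (by omega), smul_zero]

theorem IsGradedFamily.eq_bot_of_span_eq_top (h𝓜 : IsGradedFamily σ 𝓜) {a b : ℤ}
    (hspan : Submodule.span (MvPolynomial σ F) (𝓜 a : Set M) = ⊤) (hb : b < a) : 𝓜 b = ⊥ := by
  have hcomponent : ∀ x : M, ∀ c < a, (DirectSum.decompose 𝓜 x c : M) = 0 := by
    intro x
    have hx : x ∈ Submodule.span (MvPolynomial σ F) (𝓜 a : Set M) := hspan ▸ Submodule.mem_top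
    induction hx using Submodule.span_induction with
    | mem x hx => exact fun c hc => DirectSum.decompose_of_mem_ne 𝓜 hx hc.ne'
    | zero => simp
    | add x y _ _ hx hy => exact fun c hc => by simp [hx c hc, hy c hc]
    | smul p x _ hx =>
      intro c hc
      rw [← sum_homogeneousComponent p, Finset.sum_smul, DirectSum.decompose_sum,
        DFinsupp.finsetSum_apply, AddSubmonoidClass.coe_finsetSum]
      refine Finset.sum_eq_zero fun i _ => ?_
      rw [h𝓜.decompose_smul (homogeneousComponent_mem i p), hx _ (by omega), smul_zero]
  refine (Submodule.eq_bot_iff _).mpr fun x hx => ?_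
  rw [← DirectSum.decompose_of_mem_same 𝓜 hx, hcomponent x b hb]

variable {G : Set (MvPolynomial σ F)} {d : ℕ}

theorem IsGradedFamily.decompose_mem_of_mem_span_smul (h𝓜 : IsGradedFamily σ 𝓜)
    (hG : ∀ g ∈ G, g ∈ homogeneousSubmodule σ F d) {K P : Submodule (MvPolynomial σ F) M}
    (hK : K.IsHomogeneous 𝓜) {b : ℤ} (hP : ∀ g ∈ G, ∀ u ∈ K, u ∈ 𝓜 (b - d) → g • u ∈ P)
    {w : M} (hw : w ∈ Ideal.span G • K) : (DirectSum.decompose 𝓜 w b : M) ∈ P := by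
  rw [Submodule.span_smul_eq, Submodule.mem_set_smul] at hw
  obtain ⟨c, hc, rfl⟩ := hw
  rw [Finsupp.sum, AddSubmonoidClass.coe_finsetSum, DirectSum.decompose_sum,
    DFinsupp.finsetSum_apply, AddSubmonoidClass.coe_finsetSum]
  refine Submodule.sum_mem _ fun g hg => ?_
  rw [SetLike.val_smul, h𝓜.decompose_smul (hG g (hc hg))]
  exact hP g (hc hg) _ (hK (b - d) (c g).2) (SetLike.coe_mem _)

theorem IsGradedFamily.isHomogeneous_span_smul (h𝓜 : IsGradedFamily σ 𝓜)
    (hG : ∀ g ∈ G, g ∈ homogeneousSubmodule σ F d) {K : Submodule (MvPolynomial σ F) M}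
    (hK : K.IsHomogeneous 𝓜) : (Ideal.span G • K).IsHomogeneous 𝓜 :=
  fun _ _ hw => h𝓜.decompose_mem_of_mem_span_smul hG hK
    (fun _ hg _ hu _ => Submodule.smul_mem_smul (Ideal.subset_span hg) hu) hw

theorem IsGradedFamily.isHomogeneous_span_pow_smul_top (h𝓜 : IsGradedFamily σ 𝓜)
    (hG : ∀ g ∈ G, g ∈ homogeneousSubmodule σ F d) (t : ℕ) :
    (Ideal.span G ^ t • (⊤ : Submodule (MvPolynomial σ F) M)).IsHomogeneous 𝓜 := by
  induction t with
  | zero =>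
    rw [pow_zero, one_smul]
    exact fun _ _ _ => Submodule.mem_top
  | succ t ih =>
    rw [pow_succ', Submodule.mul_smul]
    exact h𝓜.isHomogeneous_span_smul hG ih

end Decomposition

section InducedGradings

variable [IsScalarTower F (MvPolynomial σ F) M] {𝓜 : ℤ → Submodule F M}
  {K K' : Submodule (MvPolynomial σ F) M}

variable (𝓜 K) in
/-- The grading `j ↦ K ∩ M_j` of a graded submodule `K ⊆ M`, as a family of subspaces of `M`. -/
noncomputable def inducedGrading (j : ℤ) : Submodule F M :=
  K.restrictScalars F ⊓ 𝓜 j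

variable (𝓜 K) in
/-- The grading of `M ⧸ K` by the images of the `M_j`. -/
noncomputable def quotientGrading (j : ℤ) : Submodule F (M ⧸ K) :=
  (𝓜 j).map (K.mkQ.restrictScalars F)

theorem mem_inducedGrading_iff {j : ℤ} {x : M} :
    x ∈ inducedGrading 𝓜 K j ↔ x ∈ K ∧ x ∈ 𝓜 j :=
  Iff.rfl

theorem inducedGrading_le : inducedGrading 𝓜 K ≤ 𝓜 :=
  fun _ => inf_le_right

theorem inducedGrading_mono (hK : K ≤ K') : inducedGrading 𝓜 K ≤ inducedGrading 𝓜 K' :=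
  fun _ _ hx => ⟨hK hx.1, hx.2⟩

theorem le_inducedGrading_iff {j : ℤ} :
    𝓜 j ≤ inducedGrading 𝓜 K j ↔ 𝓜 j ≤ K.restrictScalars F := by
  rw [inducedGrading, le_inf_iff, and_iff_left le_rfl]

theorem quotientGrading_eq_bot_iff {j : ℤ} :
    quotientGrading 𝓜 K j = ⊥ ↔ 𝓜 j ≤ K.restrictScalars F := by
  simp [quotientGrading, eq_bot_iff, SetLike.le_def]

theorem isGradedFamily_inducedGrading (h𝓜 : IsGradedFamily σ 𝓜)
    (K : Submodule (MvPolynomial σ F) M) : IsGradedFamily σ (inducedGrading 𝓜 K) :=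
  fun i j p _ hp hx => ⟨K.smul_mem p hx.1, h𝓜 i j p _ hp hx.2⟩

theorem isGradedFamily_quotientGrading (h𝓜 : IsGradedFamily σ 𝓜)
    (K : Submodule (MvPolynomial σ F) M) : IsGradedFamily σ (quotientGrading 𝓜 K) := by
  rintro i j p _ hp ⟨x, hx, rfl⟩
  exact ⟨p • x, h𝓜 i j p x hp hx, map_smul K.mkQ p x⟩

variable [DirectSum.Decomposition 𝓜] {G : Set (MvPolynomial σ F)} {d : ℕ} {b : ℤ}

theorem IsGradedFamily.inducedGrading_span_smul_le (h𝓜 : IsGradedFamily σ 𝓜)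
    (hG : ∀ g ∈ G, g ∈ homogeneousSubmodule σ F d) (hK : K.IsHomogeneous 𝓜)
    {P : Submodule (MvPolynomial σ F) M}
    (hP : ∀ g ∈ G, ∀ u ∈ inducedGrading 𝓜 K (b - d), g • u ∈ P) :
    inducedGrading 𝓜 (Ideal.span G • K) b ≤ P.restrictScalars F := by
  rintro w ⟨hw, hwb⟩
  rw [Submodule.restrictScalars_mem, ← DirectSum.decompose_of_mem_same 𝓜 hwb]
  exact h𝓜.decompose_mem_of_mem_span_smul hG hK (fun g hg u hu hub => hP g hg u ⟨hu, hub⟩) hw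

theorem IsGradedFamily.le_span_smul (h𝓜 : IsGradedFamily σ 𝓜)
    (hG : ∀ g ∈ G, g ∈ homogeneousSubmodule σ F d) (hK : K.IsHomogeneous 𝓜)
    (hb : 𝓜 b ≤ (Ideal.span G • K).restrictScalars F)
    (hbd : 𝓜 (b - d) ≤ K'.restrictScalars F) :
    𝓜 b ≤ (Ideal.span G • K').restrictScalars F :=
  (le_inducedGrading_iff.mpr hb).trans <| h𝓜.inducedGrading_span_smul_le hG hK fun _ hg _ hu =>
    Submodule.smul_mem_smul (Ideal.subset_span hg) (hbd hu.2)

theorem IsGradedFamily.inducedGrading_span_pow_smul_top_eq_bot (h𝓜 : IsGradedFamily σ 𝓜)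
    (hG : ∀ g ∈ G, g ∈ homogeneousSubmodule σ F d) {a : ℤ} (hbelow : ∀ c < a, 𝓜 c = ⊥) {t : ℕ}
    (hb : b < d * t + a) :
    inducedGrading 𝓜 (Ideal.span G ^ t • (⊤ : Submodule (MvPolynomial σ F) M)) b = ⊥ := by
  induction t generalizing b with
  | zero => exact le_bot_iff.mp (inf_le_right.trans (hbelow b (by simpa using hb)).le)
  | succ t ih =>
    have hpred := ih (b := b - d) (by push_cast at hb; linarith)
    rw [pow_succ', Submodule.mul_smul, ← le_bot_iff]
    refine h𝓜.inducedGrading_span_smul_le (P := ⊥) hG (h𝓜.isHomogeneous_span_pow_smul_top hG t) ?_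
    intro g _ u hu
    rw [hpred, Submodule.mem_bot] at hu
    rw [hu, smul_zero]
    exact Submodule.zero_mem _

variable (𝓜) in
theorem eventually_decompose_eq_zero (x : M) :
    ∀ᶠ j in atTop, (DirectSum.decompose 𝓜 x j : M) = 0 := by
  have hfinite : {j | DirectSum.decompose 𝓜 x j ≠ 0}.Finite := DFinsupp.finite_support _
  filter_upwards [atTop_le_cofinite hfinite.eventually_cofinite_notMem] with j hj
  rw [not_not.mp hj, ZeroMemClass.coe_zero]

theorem eventually_le_of_finite_quotient (hK : K.IsHomogeneous 𝓜) [Module.Finite F (M ⧸ K)] :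
    ∀ᶠ j in atTop, 𝓜 j ≤ K.restrictScalars F := by
  obtain ⟨m, s, hs⟩ := Module.Finite.exists_fin (R := F) (M := M ⧸ K)
  choose y hy using fun i => K.mkQ_surjective (s i)
  have hvanish : ∀ᶠ j in atTop, ∀ i, (DirectSum.decompose 𝓜 (y i) j : M) = 0 :=
    eventually_all.mpr fun i => eventually_decompose_eq_zero 𝓜 (y i)
  filter_upwards [hvanish] with j hj x hx
  obtain ⟨c, hc⟩ := (Submodule.mem_span_range_iff_exists_fun F).mp
    (hs ▸ Submodule.mem_top : K.mkQ x ∈ Submodule.span F (Set.range s))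
  have hmem : x - ∑ i, c i • y i ∈ K := by
    rw [← Submodule.Quotient.mk_eq_zero, ← Submodule.mkQ_apply, map_sub, map_sum, ← hc, sub_eq_zero]
    exact Finset.sum_congr rfl fun i _ =>
      (congrArg (c i • ·) (hy i).symm).trans ((K.mkQ.restrictScalars F).map_smul (c i) (y i)).symm
  have hcomponent : (DirectSum.decompose 𝓜 (x - ∑ i, c i • y i) j : M) = x := by
    simp [DirectSum.decompose_sub, DirectSum.decompose_sum, DirectSum.decompose_smul,
      DirectSum.smul_apply, DirectSum.decompose_of_mem_same 𝓜 hx, hj]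
  rw [Submodule.restrictScalars_mem, ← hcomponent]
  exact hK j hmem

theorem IsGradedFamily.eventually_le_span_pow_smul_top (h𝓜 : IsGradedFamily σ 𝓜)
    (hG : ∀ g ∈ G, g ∈ homogeneousSubmodule σ F d)
    [Module.Finite F (M ⧸ (Ideal.span G • (⊤ : Submodule (MvPolynomial σ F) M)))] (t : ℕ) :
    ∀ᶠ j in atTop,
      𝓜 j ≤ (Ideal.span G ^ t • (⊤ : Submodule (MvPolynomial σ F) M)).restrictScalars F := by
  have htop : (⊤ : Submodule (MvPolynomial σ F) M).IsHomogeneous 𝓜 := fun _ _ _ => Submodule.mem_top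
  induction t with
  | zero => simp
  | succ t ih =>
    filter_upwards [eventually_le_of_finite_quotient (h𝓜.isHomogeneous_span_smul hG htop),
      (tendsto_atTop_add_const_right atTop (-(d : ℤ)) tendsto_id).eventually ih] with j hj hjd
    rw [pow_succ', Submodule.mul_smul]
    exact h𝓜.le_span_smul hG htop hj hjd

end InducedGradings

end GradedModule

theorem span_eq_bot_or_eq_top_of_degree_zero {F : Type*} [Field F] {σ : Type*}
    {G : Set (MvPolynomial σ F)} (hG : ∀ g ∈ G, g ∈ homogeneousSubmodule σ F 0) :
    Ideal.span G = ⊥ ∨ Ideal.span G = ⊤ := by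
  refine or_iff_not_imp_left.mpr fun hne => ?_
  obtain ⟨g, hg, hg0⟩ : ∃ g ∈ G, g ≠ 0 := by
    simpa only [ne_eq, Ideal.span_eq_bot, not_forall, exists_prop] using hne
  have hgC : g = C (coeff 0 g) :=
    totalDegree_eq_zero_iff_eq_C.mp ((hG g hg : g.IsHomogeneous 0).totalDegree hg0)
  have hcoeff : coeff 0 g ≠ 0 := fun h => hg0 (by rw [hgC, h, C_0])
  exact Ideal.eq_top_of_isUnit_mem _ (Ideal.subset_span hg) (hgC ▸ (IsUnit.mk0 _ hcoeff).map C)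

section Powers

variable {F : Type*} [Field F] {n : ℕ} {M : Type*} [AddCommGroup M]
  [Module (MvPolynomial (Fin (n + 1)) F) M] [Module F M]
  [IsScalarTower F (MvPolynomial (Fin (n + 1)) F) M] {𝓜 : ℤ → Submodule F M}
  {K : Submodule (MvPolynomial (Fin (n + 1)) F) M} {r ρ ρ' τ τ' a : ℤ}

theorem IsRegularity.not_le_of_quotientGrading
    (hτ : IsRegularity F (n + 1) (quotientGrading 𝓜 K) τ) : ¬ 𝓜 τ ≤ K.restrictScalars F :=
  fun hle => hτ.ne_bot (quotientGrading_eq_bot_iff.mpr hle)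

theorem IsRegularity.le_of_quotientGrading
    (hτ : IsRegularity F (n + 1) (quotientGrading 𝓜 K) τ) (h𝓜 : IsGradedFamily (Fin (n + 1)) 𝓜)
    (hK : ∀ᶠ j in atTop, 𝓜 j ≤ K.restrictScalars F) (ha : τ < a) :
    𝓜 a ≤ K.restrictScalars F :=
  quotientGrading_eq_bot_iff.mp <| hτ.regularityLE.eq_bot_of_eventually_eq_bot
    (isGradedFamily_quotientGrading h𝓜 K) (hK.mono fun _ => quotientGrading_eq_bot_iff.mpr) ha

theorem IsRegularity.regularityLE_max (hρ : IsRegularity F (n + 1) (inducedGrading 𝓜 K) ρ)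
    (hτ : IsRegularity F (n + 1) (quotientGrading 𝓜 K) τ) (h𝓜 : IsGradedFamily (Fin (n + 1)) 𝓜)
    (hK : ∀ᶠ j in atTop, 𝓜 j ≤ K.restrictScalars F) : RegularityLE F (n + 1) 𝓜 (max ρ τ) :=
  hρ.regularityLE.of_ge inducedGrading_le (le_max_left ρ τ) fun _ hb =>
    le_inducedGrading_iff.mpr (hτ.le_of_quotientGrading h𝓜 hK ((le_max_right ρ τ).trans_lt hb))

-- The long exact sequence of `Tor` for `0 → K → M → M ⧸ K → 0`, in the degrees above `reg M`.
theorem IsRegularity.inducedGrading_eq_quotientGrading_add_one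
    (hρ : IsRegularity F (n + 1) (inducedGrading 𝓜 K) ρ)
    (hτ : IsRegularity F (n + 1) (quotientGrading 𝓜 K) τ) (h𝓜 : IsGradedFamily (Fin (n + 1)) 𝓜)
    (hK : ∀ᶠ j in atTop, 𝓜 j ≤ K.restrictScalars F) (hr : RegularityLE F (n + 1) 𝓜 r)
    (hrρ : r < ρ) : ρ = τ + 1 := by
  apply le_antisymm
  · have hmax : ρ ≤ max r (τ + 1) := hρ.le_of_regularityLE <|
      hr.of_le inducedGrading_le (le_max_left r (τ + 1)) fun b hb => le_inducedGrading_iff.mpr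
        (hτ.le_of_quotientGrading h𝓜 hK (by omega))
    omega
  · by_contra! hρτ
    exact hτ.not_le_of_quotientGrading <| le_inducedGrading_iff.mp <|
      hr.le_of_eventually_le hρ.regularityLE h𝓜 (isGradedFamily_inducedGrading h𝓜 K)
        inducedGrading_le (hK.mono fun _ => le_inducedGrading_iff.mpr) (by omega) (by omega)

variable {G : Set (MvPolynomial (Fin (n + 1)) F)} {d t : ℕ}

theorem IsRegularity.degree_pos
    (hG : ∀ g ∈ G, g ∈ homogeneousSubmodule (Fin (n + 1)) F d)
    (hρ : IsRegularity F (n + 1)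
      (inducedGrading 𝓜 (Ideal.span G • (⊤ : Submodule (MvPolynomial (Fin (n + 1)) F) M))) ρ)
    (hτ : IsRegularity F (n + 1)
      (quotientGrading 𝓜 (Ideal.span G • (⊤ : Submodule (MvPolynomial (Fin (n + 1)) F) M))) τ) :
    0 < d := by
  refine Nat.pos_of_ne_zero fun hd => ?_
  subst hd
  rcases span_eq_bot_or_eq_top_of_degree_zero hG with hbot | htop
  · refine hρ.ne_bot (le_bot_iff.mp ?_)
    rw [hbot, Submodule.bot_smul]
    exact inf_le_left
  · refine hτ.not_le_of_quotientGrading ?_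
    rw [htop, Submodule.top_smul]
    exact le_top

variable [DirectSum.Decomposition 𝓜]

theorem RegularityLE.inducedGrading_span_smul_span_smul (h𝓜 : IsGradedFamily (Fin (n + 1)) 𝓜)
    (hG : ∀ g ∈ G, g ∈ homogeneousSubmodule (Fin (n + 1)) F d) (hd : 0 < d)
    (hK : K.IsHomogeneous 𝓜)
    (hevent : ∀ᶠ j in atTop, 𝓜 j ≤ (Ideal.span G • K).restrictScalars F)
    (hρ : RegularityLE F (n + 1) (inducedGrading 𝓜 (Ideal.span G • K)) ρ) :
    RegularityLE F (n + 1) (inducedGrading 𝓜 (Ideal.span G • Ideal.span G • K)) (ρ + d) := by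
  have h𝓛 : IsGradedFamily (Fin (n + 1)) (inducedGrading 𝓜 (Ideal.span G • K)) :=
    isGradedFamily_inducedGrading h𝓜 _
  have hle : inducedGrading 𝓜 (Ideal.span G • Ideal.span G • K) ≤
      inducedGrading 𝓜 (Ideal.span G • K) := inducedGrading_mono Submodule.smul_le_right
  suffices hmul : ∀ b, ρ + d ≤ b → ∀ g ∈ G, ∀ u ∈ inducedGrading 𝓜 K (b - d),
      g • u ∈ Ideal.span G • Ideal.span G • K from
    RegularityLE.of_le hρ hle (by omega) fun b hb =>
      le_inf (h𝓜.inducedGrading_span_smul_le hG hK (hmul b hb)) inf_le_right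
  -- Modulo torsion `u ∈ K` lies in `I • K`, and torsion does not survive multiplication by `g`.
  intro b hb g hg u hu
  obtain ⟨m, y, hy, huy⟩ := hρ.exists_sub_mem_varsTorsion_of_eventually_le h𝓜 h𝓛
    (hevent.mono fun _ => le_inducedGrading_iff.mpr) (by omega) hu.2
  rw [mem_inducedGrading_iff] at hu hy
  have hgI : g ∈ Ideal.span G := Ideal.subset_span hg
  have hyK : y ∈ K := Submodule.smul_le_right hy.1
  have hmem : g • (u - y) ∈ inducedGrading 𝓜 (Ideal.span G • K) b :=
    mem_inducedGrading_iff.mpr ⟨Submodule.smul_mem_smul hgI (sub_mem hu.1 hyK),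
      h𝓜.smul_mem (hG g hg) (sub_mem hu.2 hy.2)⟩
  have hzero : g • (u - y) = 0 :=
    hρ.eq_zero_of_mem_varsTorsion h𝓛 (by omega) hmem (Submodule.smul_mem _ g huy)
  rw [smul_sub, sub_eq_zero] at hzero
  rw [hzero]
  exact Submodule.smul_mem_smul hgI hy.1

theorem IsRegularity.quotientGrading_span_smul_span_smul_le (h𝓜 : IsGradedFamily (Fin (n + 1)) 𝓜)
    (hG : ∀ g ∈ G, g ∈ homogeneousSubmodule (Fin (n + 1)) F d) (hK : K.IsHomogeneous 𝓜)
    (hevent : ∀ᶠ j in atTop, 𝓜 j ≤ (Ideal.span G • K).restrictScalars F)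
    (hτ : IsRegularity F (n + 1) (quotientGrading 𝓜 (Ideal.span G • K)) τ)
    (hτ' : IsRegularity F (n + 1) (quotientGrading 𝓜 (Ideal.span G • Ideal.span G • K)) τ') :
    τ' ≤ τ + d := by
  by_contra! hlt
  have hle : ∀ b, τ < b → 𝓜 b ≤ (Ideal.span G • K).restrictScalars F := fun b hb =>
    hτ.le_of_quotientGrading h𝓜 hevent hb
  exact hτ'.not_le_of_quotientGrading <|
    h𝓜.le_span_smul hG hK (hle τ' (by omega)) (hle (τ' - d) (by omega))

theorem IsRegularity.inducedGrading_span_pow_succ_le (h𝓜 : IsGradedFamily (Fin (n + 1)) 𝓜)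
    (hG : ∀ g ∈ G, g ∈ homogeneousSubmodule (Fin (n + 1)) F d) (hd : 0 < d) (ht : 1 ≤ t)
    (hevent : ∀ᶠ j in atTop, 𝓜 j ≤
      (Ideal.span G ^ t • ⊤ : Submodule (MvPolynomial (Fin (n + 1)) F) M).restrictScalars F)
    (hρ : IsRegularity F (n + 1) (inducedGrading 𝓜
      (Ideal.span G ^ t • (⊤ : Submodule (MvPolynomial (Fin (n + 1)) F) M))) ρ)
    (hρ' : IsRegularity F (n + 1) (inducedGrading 𝓜
      (Ideal.span G ^ (t + 1) • (⊤ : Submodule (MvPolynomial (Fin (n + 1)) F) M))) ρ') :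
    ρ' ≤ ρ + d := by
  obtain ⟨s, rfl⟩ := Nat.exists_eq_add_of_le' ht
  simp only [pow_succ' (Ideal.span G), Submodule.mul_smul] at hevent hρ hρ'
  exact hρ'.le_of_regularityLE <| RegularityLE.inducedGrading_span_smul_span_smul h𝓜 hG hd
    (h𝓜.isHomogeneous_span_pow_smul_top hG s) hevent hρ.regularityLE

theorem IsRegularity.quotientGrading_span_pow_succ_le (h𝓜 : IsGradedFamily (Fin (n + 1)) 𝓜)
    (hG : ∀ g ∈ G, g ∈ homogeneousSubmodule (Fin (n + 1)) F d) (ht : 1 ≤ t)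
    (hevent : ∀ᶠ j in atTop, 𝓜 j ≤
      (Ideal.span G ^ t • ⊤ : Submodule (MvPolynomial (Fin (n + 1)) F) M).restrictScalars F)
    (hτ : IsRegularity F (n + 1) (quotientGrading 𝓜
      (Ideal.span G ^ t • (⊤ : Submodule (MvPolynomial (Fin (n + 1)) F) M))) τ)
    (hτ' : IsRegularity F (n + 1) (quotientGrading 𝓜
      (Ideal.span G ^ (t + 1) • (⊤ : Submodule (MvPolynomial (Fin (n + 1)) F) M))) τ') :
    τ' ≤ τ + d := by
  obtain ⟨s, rfl⟩ := Nat.exists_eq_add_of_le' ht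
  have hs := h𝓜.isHomogeneous_span_pow_smul_top hG s
  have hpow (k : ℕ) : Ideal.span G ^ (k + 1) • (⊤ : Submodule (MvPolynomial (Fin (n + 1)) F) M) =
      Ideal.span G • Ideal.span G ^ k • ⊤ := by
    rw [pow_succ', Submodule.mul_smul]
  rw [hpow] at hevent
  refine IsRegularity.quotientGrading_span_smul_span_smul_le h𝓜 hG hs hevent (hpow s ▸ hτ) ?_
  rw [← hpow, ← hpow]
  exact hτ'

end Powers

theorem exists_isGLB_range_of_antitone_of_eventuallyEq {u v : ℕ → ℤ} (hu : Antitone u)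
    (hv : Antitone v) (hb : BddBelow (Set.range u)) (huv : u =ᶠ[atTop] v) :
    ∃ c, IsGLB (Set.range u) c ∧ IsGLB (Set.range v) c ∧ ∀ᶠ t in atTop, u t = c := by
  have hlim := tendsto_atTop_ciInf hu hb
  refine ⟨⨅ t, u t, isGLB_ciInf hb, isGLB_of_tendsto_atTop hv (hlim.congr' huv), ?_⟩
  rwa [nhds_discrete, tendsto_pure] at hlim

theorem setOf_exists_one_le_eq_range (u : ℕ → ℤ) :
    {z : ℤ | ∃ t : ℕ, 1 ≤ t ∧ z = u t} = Set.range fun t => u (t + 1) := by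
  ext z
  constructor
  · rintro ⟨t, ht, rfl⟩
    exact ⟨t - 1, congrArg u (Nat.sub_add_cancel ht)⟩
  · rintro ⟨t, rfl⟩
    exact ⟨t + 1, Nat.le_add_left 1 t, rfl⟩

theorem exists_isGLB_of_eventuallyEq {u v : ℕ → ℤ} {a : ℤ} (hbound : ∀ t, 1 ≤ t → a ≤ u t)
    (hu : ∀ t, 1 ≤ t → u (t + 1) ≤ u t) (hv : ∀ t, 1 ≤ t → v (t + 1) ≤ v t)
    (huv : u =ᶠ[atTop] v) :
    ∃ c, IsGLB {z : ℤ | ∃ t : ℕ, 1 ≤ t ∧ z = u t} c ∧ IsGLB {z : ℤ | ∃ t : ℕ, 1 ≤ t ∧ z = v t} c ∧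
      ∃ t₀ : ℕ, ∀ t ≥ t₀, u t = c := by
  rw [setOf_exists_one_le_eq_range, setOf_exists_one_le_eq_range]
  obtain ⟨c, huc, hvc, hc⟩ := exists_isGLB_range_of_antitone_of_eventuallyEq
    (antitone_nat_of_succ_le fun t => hu (t + 1) (Nat.le_add_left 1 t))
    (antitone_nat_of_succ_le fun t => hv (t + 1) (Nat.le_add_left 1 t))
    ⟨a, Set.forall_mem_range.mpr fun t => hbound (t + 1) (Nat.le_add_left 1 t)⟩
    ((tendsto_add_atTop_nat 1).eventually huv)
  exact ⟨c, huc, hvc, eventually_atTop.mp <|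
    (map_add_atTop_eq_nat 1).ge (hc : ∀ᶠ s in map (· + 1) atTop, u s = c)⟩

theorem stmt_3_general {F : Type*} [Field F] (n : ℕ) (d : ℕ)
    (M : Type*) [AddCommGroup M] [Module (MvPolynomial (Fin (n + 1)) F) M]
    [Module F M] [IsScalarTower F (MvPolynomial (Fin (n + 1)) F) M]
    (𝓜 : ℤ → Submodule F M) [DirectSum.Decomposition 𝓜]
    (h𝓜 : IsGradedFamily (Fin (n + 1)) 𝓜) (a : ℤ) (hbelow : ∀ b < a, 𝓜 b = ⊥)
    (G : Set (MvPolynomial (Fin (n + 1)) F))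
    (hG : ∀ g ∈ G, g ∈ homogeneousSubmodule (Fin (n + 1)) F d)
    [Module.Finite F (M ⧸ (Ideal.span G • ⊤ : Submodule (MvPolynomial (Fin (n + 1)) F) M))]
    (f e : ℕ → ℤ)
    (hf : ∀ t : ℕ, 1 ≤ t → IsRegularity F (n + 1) (quotientGrading 𝓜
      (Ideal.span G ^ t • (⊤ : Submodule (MvPolynomial (Fin (n + 1)) F) M))) (d * t + f t - 1))
    (he : ∀ t : ℕ, 1 ≤ t → IsRegularity F (n + 1) (inducedGrading 𝓜
      (Ideal.span G ^ t • (⊤ : Submodule (MvPolynomial (Fin (n + 1)) F) M))) (d * t + e t)) :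
    (∀ t : ℕ, 1 ≤ t → a ≤ e t ∧ e (t + 1) ≤ e t) ∧
    ∃ c : ℤ,
      IsGLB {z : ℤ | ∃ t : ℕ, 1 ≤ t ∧ z = e t} c ∧
      IsGLB {z : ℤ | ∃ t : ℕ, 1 ≤ t ∧ z = f t} c ∧
      ∃ t₀ : ℕ, ∀ t ≥ t₀, e t = c := by
  have hevent := h𝓜.eventually_le_span_pow_smul_top hG
  have hd : 0 < d := by
    have he₁ := he 1 le_rfl
    have hf₁ := hf 1 le_rfl
    rw [pow_one] at he₁ hf₁
    exact he₁.degree_pos hG hf₁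
  have hbound : ∀ t, 1 ≤ t → a ≤ e t := fun t ht => by
    linarith [(he t ht).le_of_forall_lt_eq_bot fun b hb =>
      h𝓜.inducedGrading_span_pow_smul_top_eq_bot hG hbelow hb]
  have he_succ : ∀ t, 1 ≤ t → e (t + 1) ≤ e t := fun t ht => by
    have hstep := (he t ht).inducedGrading_span_pow_succ_le h𝓜 hG hd ht (hevent t)
      (he (t + 1) ht.step)
    rw [Nat.cast_succ] at hstep
    linarith
  have hf_succ : ∀ t, 1 ≤ t → f (t + 1) ≤ f t := fun t ht => by
    have hstep := (hf t ht).quotientGrading_span_pow_succ_le h𝓜 hG ht (hevent t)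
      (hf (t + 1) ht.step)
    rw [Nat.cast_succ] at hstep
    linarith
  have hef : e =ᶠ[atTop] f := by
    have hreg := (he 1 le_rfl).regularityLE_max (hf 1 le_rfl) h𝓜 (hevent 1)
    have hlarge : Tendsto (fun t : ℕ => (d * t + a : ℤ)) atTop atTop :=
      tendsto_atTop_add_const_right atTop a
        (tendsto_natCast_atTop_atTop.const_mul_atTop' (by exact_mod_cast hd))
    filter_upwards [eventually_ge_atTop 1, hlarge.eventually_gt_atTop _] with t ht hrt
    linarith [(he t ht).inducedGrading_eq_quotientGrading_add_one (hf t ht) h𝓜 (hevent t) hreg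
      (hrt.trans_le (by linarith [hbound t ht]))]
  exact ⟨fun t ht => ⟨hbound t ht, he_succ t ht⟩,
    exists_isGLB_of_eventuallyEq hbound he_succ hf_succ hef⟩

/-!
STATEMENT 3: Let `S = F[x_0, …, x_n]`, let `M` be a finitely generated graded `S`-module
generated in degree `0` which does not have finite length, and let `I ⊆ S` be a homogeneous
ideal generated by forms of degree `d` such that `M/IM` has finite length.  Write
`reg (M/I^tM) = d*t + f_t - 1` and `reg (I^tM) = d*t + e_t`.  Then `e_1 ≥ e_2 ≥ ⋯ ≥ 0`,
i.e. the sequence `(e_t)` is nonincreasing and nonnegative; moreover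
`inf_t e_t = inf_t f_t =: e`, and `reg (I^tM) = d*t + e` for all sufficiently large `t`.

The regularity of the graded submodule `I^tM ⊆ M` is expressed via `IsRegularity` applied to
the grading `j ↦ (I^tM) ∩ 𝓜 j`, and that of `M/I^tM` via the image grading on the quotient.
-/
theorem stmt_3 {F : Type*} [Field F] (n : ℕ) (d : ℕ)
    (M : Type*) [AddCommGroup M] [Module (MvPolynomial (Fin (n + 1)) F) M]
    [Module F M] [IsScalarTower F (MvPolynomial (Fin (n + 1)) F) M]
    [Module.Finite (MvPolynomial (Fin (n + 1)) F) M]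
    -- the grading on M
    (𝓜 : ℤ → Submodule F M)
    (hdecomp : DirectSum.IsInternal 𝓜)
    (hgradedsmul : ∀ (i : ℕ) (j : ℤ) (p : MvPolynomial (Fin (n + 1)) F) (x : M),
      p ∈ homogeneousSubmodule (Fin (n + 1)) F i → x ∈ 𝓜 j → p • x ∈ 𝓜 (i + j))
    -- M is generated in degree 0 and does not have finite length
    (hgen0 : Submodule.span (MvPolynomial (Fin (n + 1)) F) (𝓜 0 : Set M) = ⊤)
    (hinf : ¬ Module.Finite F M)
    -- I is generated by forms of degree d, and M/IM has finite length
    (I : Ideal (MvPolynomial (Fin (n + 1)) F))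
    (G : Set (MvPolynomial (Fin (n + 1)) F))
    (hG : ∀ g ∈ G, g ∈ homogeneousSubmodule (Fin (n + 1)) F d)
    (hIG : I = Ideal.span G)
    (hfl : Module.Finite F
      (M ⧸ (I • ⊤ : Submodule (MvPolynomial (Fin (n + 1)) F) M)))
    -- reg (M/I^tM) = d*t + f_t - 1 and reg (I^tM) = d*t + e_t for t ≥ 1
    (f e : ℕ → ℤ)
    (hf : ∀ t : ℕ, 1 ≤ t →
      IsRegularity F (n + 1)
        (fun j => (𝓜 j).map
          ((I ^ t • (⊤ : Submodule (MvPolynomial (Fin (n + 1)) F) M)).mkQ.restrictScalars F))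
        (d * t + f t - 1))
    (he : ∀ t : ℕ, 1 ≤ t →
      IsRegularity F (n + 1)
        (fun j =>
          (I ^ t • (⊤ : Submodule (MvPolynomial (Fin (n + 1)) F) M)).restrictScalars F ⊓ 𝓜 j)
        (d * t + e t)) :
    (∀ t : ℕ, 1 ≤ t → 0 ≤ e t ∧ e (t + 1) ≤ e t) ∧
    ∃ c : ℤ,
      IsGLB {z : ℤ | ∃ t : ℕ, 1 ≤ t ∧ z = e t} c ∧
      IsGLB {z : ℤ | ∃ t : ℕ, 1 ≤ t ∧ z = f t} c ∧
      ∃ t₀ : ℕ, ∀ t ≥ t₀, e t = c := by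
  subst hIG
  let _ := hdecomp.chooseDecomposition
  exact stmt_3_general n d M 𝓜 hgradedsmul 0
    (fun _ => IsGradedFamily.eq_bot_of_span_eq_top hgradedsmul hgen0) G hG f e hf he
end

section
/- Let S = F[x_0,…,x_n] be a polynomial ring over a field F, and let I ⊆ S be an ideal generated by homogeneous forms of degree d such that S/I has finite length. Then for every t ≥ 1, every homogeneous polynomial of degree ≥ td + n(d−1) lies in I^t; equivalently, m^{td+n(d−1)} ⊆ I^t, where m = (x_0,…,x_n). -/
open MvPolynomial

/-!
Over an infinite field, start from the regular sequence of all variables `x₀, …, xₙ`, which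
generates an ideal containing every form of degree at least `1`, and exchange the variables, last
one first, for `F`-linear combinations of the generators of `I`. Let `L` be generated by the forms
chosen so far and the variables still present other than the last one, `x`. Since `x` is regular
modulo `L` and has a power in `I`, prime avoidance gives a combination `f` of the generators which
is regular modulo `L`. In large degrees `x ^ d` is surjective and `f` is injective on the graded
pieces of `S ⧸ L`, so by a dimension count `f` is surjective as well: replacing `x` by `f` raises
by only `d - 1` the degree from which on the ideal contains every form. After `n + 1` exchanges this
is the case `t = 1`. A general field follows by faithfully flat descent from its algebraic closure,
and higher powers by expanding a form in the generators and treating its coefficients inductively.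
-/

open RingTheory.Sequence DirectSum

section RegularElements

variable {A : Type*} [CommRing A]

lemma mem_sup_span_singleton_iff_exists_sub_mul_mem {L : Ideal A} {x u : A} :
    u ∈ L ⊔ Ideal.span {x} ↔ ∃ v, u - x * v ∈ L := by
  rw [sup_comm, Ideal.mem_span_singleton_sup]
  constructor
  · rintro ⟨v, l, hl, rfl⟩
    exact ⟨v, by rwa [mul_comm, add_sub_cancel_left]⟩
  · rintro ⟨v, hv⟩
    exact ⟨v, _, hv, by ring⟩

lemma isSMulRegular_quotient_ideal_iff {L : Ideal A} {f : A} :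
    IsSMulRegular (A ⧸ L) f ↔ ∀ u, f * u ∈ L → u ∈ L :=
  isSMulRegular_quotient_iff_mem_of_smul_mem L f

lemma isWeaklyRegular_quotient_append_iff (J : Ideal A) (rs₁ rs₂ : List A) :
    IsWeaklyRegular (A ⧸ J) (rs₁ ++ rs₂) ↔
      IsWeaklyRegular (A ⧸ J) rs₁ ∧ IsWeaklyRegular (A ⧸ J ⊔ Ideal.ofList rs₁) rs₂ := by
  have hmap : (Ideal.ofList rs₁ • ⊤ : Submodule A (A ⧸ J)) =
      Submodule.map J.mkQ (Ideal.ofList rs₁) := by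
    rw [← Ideal.mul_top (Ideal.ofList rs₁), ← smul_eq_mul, Submodule.map_smul'',
      Submodule.map_top, Submodule.range_mkQ, smul_eq_mul, Ideal.mul_top]
  rw [isWeaklyRegular_append_iff, ((Submodule.quotEquivOfEq _ _ hmap).trans
    (Submodule.quotientQuotientEquivQuotientSup J _)).isWeaklyRegular_congr]

lemma isWeaklyRegular_quotient_cons_iff (J : Ideal A) (x : A) (rs : List A) :
    IsWeaklyRegular (A ⧸ J) (x :: rs) ↔
      IsSMulRegular (A ⧸ J) x ∧ IsWeaklyRegular (A ⧸ J ⊔ Ideal.span {x}) rs := by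
  rw [← List.singleton_append, isWeaklyRegular_quotient_append_iff, isWeaklyRegular_singleton_iff,
    Ideal.ofList_singleton]

lemma isSMulRegular_quotient_sup_span_of_swap {L : Ideal A} {x f : A}
    (hx : IsSMulRegular (A ⧸ L) x) (hf : IsSMulRegular (A ⧸ L ⊔ Ideal.span {x}) f) :
    IsSMulRegular (A ⧸ L ⊔ Ideal.span {f}) x := by
  rw [isSMulRegular_quotient_ideal_iff] at hx hf ⊢
  intro u hu
  obtain ⟨v, hv⟩ := mem_sup_span_singleton_iff_exists_sub_mul_mem.1 hu
  have hfv : f * v ∈ L ⊔ Ideal.span {x} :=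
    mem_sup_span_singleton_iff_exists_sub_mul_mem.2 ⟨u, by simpa using neg_mem hv⟩
  obtain ⟨w, hw⟩ := mem_sup_span_singleton_iff_exists_sub_mul_mem.1 (hf v hfv)
  refine mem_sup_span_singleton_iff_exists_sub_mul_mem.2 ⟨w, hx _ ?_⟩
  have hsum : x * (u - f * w) = (x * u - f * v) + f * (v - x * w) := by ring
  exact hsum ▸ add_mem hv (L.mul_mem_left f hw)

theorem exists_mem_span_isSMulRegular {F M : Type*} [Field F] [Infinite F] [Algebra F A]
    [IsNoetherianRing A] [AddCommGroup M] [Module A M] [Module.Finite A M] {G : Set A}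
    (hG : ∃ x ∈ Ideal.span G, IsSMulRegular M x) :
    ∃ f ∈ Submodule.span F G, IsSMulRegular M f := by
  by_contra! hnot
  obtain ⟨x, hxG, hx⟩ := hG
  have : Finite (associatedPrimes A M) := associatedPrimes.finite A M
  let trace (P : associatedPrimes A M) : Subspace F (Submodule.span F G) :=
    ((P : Ideal A).restrictScalars F).comap (Submodule.span F G).subtype
  have hunion := biUnion_associatedPrimes_eq_compl_regular A M
  have hcover : ⋃ P, (trace P : Set (Submodule.span F G)) = Set.univ := by
    refine Set.eq_univ_of_forall fun f => ?_
    obtain ⟨P, hP, hfP⟩ := Set.mem_iUnion₂.1 (hunion.ge (hnot f f.2))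
    exact Set.mem_iUnion.2 ⟨⟨P, hP⟩, hfP⟩
  obtain ⟨P, hP⟩ := Subspace.exists_eq_top_of_iUnion_eq_univ hcover
  have hGP : Ideal.span G ≤ P := Ideal.span_le.2 fun g hg =>
    (hP.ge Submodule.mem_top : (⟨g, Submodule.subset_span hg⟩ : Submodule.span F G) ∈ trace P)
  exact hunion.le (Set.mem_iUnion₂.2 ⟨P, P.2, hGP hxG⟩) hx

end RegularElements

section LinearAlgebra

variable {F : Type*} [Field F]

lemma range_eq_of_ker_le_of_range_le {V W : Type*} [AddCommGroup V] [Module F V]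
    [FiniteDimensional F V] [AddCommGroup W] [Module F W] {φ ψ : V →ₗ[F] W}
    (hker : φ.ker ≤ ψ.ker) (hrange : φ.range ≤ ψ.range) : φ.range = ψ.range := by
  refine Submodule.eq_of_le_of_finrank_le hrange ?_
  have := Submodule.finrank_mono hker
  have := φ.finrank_range_add_finrank_ker
  have := ψ.finrank_range_add_finrank_ker
  omega

lemma exists_sub_mul_mem_of_isSMulRegular {A : Type*} [CommRing A] [Algebra F A] {L : Ideal A}
    {V : Submodule F A} [FiniteDimensional F V] {f g : A} (hf : IsSMulRegular (A ⧸ L) f)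
    (hfg : ∀ u ∈ V, ∃ v ∈ V, f * u - g * v ∈ L) : ∀ u ∈ V, ∃ v ∈ V, g * u - f * v ∈ L := by
  let mulMod (a : A) : V →ₗ[F] A ⧸ L :=
    ((Ideal.Quotient.mkₐ F L).toLinearMap ∘ₗ LinearMap.mulLeft F a).domRestrict V
  have mulMod_apply (a : A) (u : V) : mulMod a u = Ideal.Quotient.mk L (a * u) := rfl
  have hker : (mulMod f).ker ≤ (mulMod g).ker := by
    intro u hu
    rw [LinearMap.mem_ker, mulMod_apply, Ideal.Quotient.eq_zero_iff_mem] at hu ⊢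
    exact L.mul_mem_left g (isSMulRegular_quotient_ideal_iff.1 hf u hu)
  have hrange : (mulMod f).range ≤ (mulMod g).range := by
    rintro _ ⟨u, rfl⟩
    obtain ⟨v, hv, huv⟩ := hfg u u.2
    exact ⟨⟨v, hv⟩, (Ideal.Quotient.eq.2 huv).symm⟩
  intro u hu
  obtain ⟨v, hv⟩ := (range_eq_of_ker_le_of_range_le hker hrange).ge ⟨⟨u, hu⟩, rfl⟩
  exact ⟨v, v.2, Ideal.Quotient.eq.1 hv.symm⟩

end LinearAlgebra

/-- The ideal `J` contains all elements of degree at least `e`. If `A ⧸ J` has finite length, this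
says that its regularity is less than `e`. -/
def ContainsDegreeGE {R A : Type*} [CommRing R] [CommRing A] [Algebra R A] (𝒜 : ℕ → Submodule R A)
    (e : ℕ) (J : Ideal A) : Prop :=
  ∀ s, e ≤ s → ∀ u ∈ 𝒜 s, u ∈ J

lemma ContainsDegreeGE.mono {R A : Type*} [CommRing R] [CommRing A] [Algebra R A]
    {𝒜 : ℕ → Submodule R A} {e e' : ℕ} {J J' : Ideal A} (h : ContainsDegreeGE 𝒜 e J)
    (he : e ≤ e') (hJ : J ≤ J') : ContainsDegreeGE 𝒜 e' J' :=
  fun s hs u hu => hJ (h s (he.trans hs) u hu)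

section Graded

variable {R A : Type*} [CommRing R] [CommRing A] [Algebra R A] {𝒜 : ℕ → Submodule R A}
  [GradedAlgebra 𝒜]

lemma mem_of_mem_sup_span_singleton_of_lt {L : Ideal A} (hL : L.IsHomogeneous 𝒜) {e s : ℕ}
    {x u : A} (hx : x ∈ 𝒜 e) (hu : u ∈ 𝒜 s) (hs : s < e) (h : u ∈ L ⊔ Ideal.span {x}) :
    u ∈ L := by
  obtain ⟨v, hv⟩ := mem_sup_span_singleton_iff_exists_sub_mul_mem.1 h
  simpa only [decompose_sub, DirectSum.sub_apply, AddSubgroupClass.coe_sub,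
    decompose_of_mem_same 𝒜 hu, coe_decompose_mul_of_left_mem_of_not_le 𝒜 hx hs.not_ge,
    sub_zero] using hL s hv

lemma exists_mem_sub_mul_mem_of_mem_sup_span_singleton {L : Ideal A} (hL : L.IsHomogeneous 𝒜)
    {e s : ℕ} {x u : A} (hx : x ∈ 𝒜 e) (hu : u ∈ 𝒜 (e + s)) (h : u ∈ L ⊔ Ideal.span {x}) :
    ∃ v ∈ 𝒜 s, u - x * v ∈ L := by
  obtain ⟨v, hv⟩ := mem_sup_span_singleton_iff_exists_sub_mul_mem.1 h
  refine ⟨decompose 𝒜 v s, SetLike.coe_mem _, ?_⟩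
  simpa only [decompose_sub, DirectSum.sub_apply, AddSubgroupClass.coe_sub,
    decompose_of_mem_same 𝒜 hu, coe_decompose_mul_add_of_left_mem 𝒜 hx] using hL (e + s) hv

lemma isSMulRegular_quotient_of_forall_homogeneous {L : Ideal A} (hL : L.IsHomogeneous 𝒜) {d : ℕ}
    {f : A} (hf : f ∈ 𝒜 d) (h : ∀ s, ∀ u ∈ 𝒜 s, f * u ∈ L → u ∈ L) :
    IsSMulRegular (A ⧸ L) f := by
  refine isSMulRegular_quotient_ideal_iff.2 fun u hu => (hL.mem_iff 𝒜).2 fun s => ?_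
  refine h s _ (SetLike.coe_mem _) ?_
  rw [← coe_decompose_mul_add_of_left_mem 𝒜 hf]
  exact hL (d + s) hu

lemma isSMulRegular_quotient_of_sup_span_singleton {L : Ideal A} (hL : L.IsHomogeneous 𝒜)
    {d e : ℕ} (he : 0 < e) {x f : A} (hx : x ∈ 𝒜 e) (hf : f ∈ 𝒜 d)
    (hxL : IsSMulRegular (A ⧸ L) x) (hfL : IsSMulRegular (A ⧸ L ⊔ Ideal.span {x}) f) :
    IsSMulRegular (A ⧸ L) f := by
  refine isSMulRegular_quotient_of_forall_homogeneous hL hf fun s => ?_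
  rw [isSMulRegular_quotient_ideal_iff] at hxL hfL
  induction s using Nat.strong_induction_on with
  | h s ih =>
    intro u hu hfu
    have hmem := hfL u (Ideal.mem_sup_left hfu)
    rcases lt_or_ge s e with hs | hs
    · exact mem_of_mem_sup_span_singleton_of_lt hL hx hu hs hmem
    · obtain ⟨r, rfl⟩ := Nat.exists_eq_add_of_le hs
      obtain ⟨v, hv, huv⟩ := exists_mem_sub_mul_mem_of_mem_sup_span_singleton hL hx hu hmem
      have hxfv : x * (f * v) ∈ L := by
        have heq : x * (f * v) = f * u - f * (u - x * v) := by ring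
        exact heq ▸ sub_mem hfu (L.mul_mem_left f huv)
      have hvL : v ∈ L := ih r (by omega) v hv (hxL _ hxfv)
      simpa using add_mem huv (L.mul_mem_left x hvL)

theorem isWeaklyRegular_quotient_exchange {J : Ideal A} (hJ : J.IsHomogeneous 𝒜) {rs : List A}
    (hrs : ∀ x ∈ rs, ∃ e > 0, x ∈ 𝒜 e) (hreg : IsWeaklyRegular (A ⧸ J) rs) {d : ℕ} {f : A}
    (hf : f ∈ 𝒜 d) (hfreg : IsSMulRegular (A ⧸ J ⊔ Ideal.ofList rs) f) :
    IsSMulRegular (A ⧸ J) f ∧ IsWeaklyRegular (A ⧸ J ⊔ Ideal.span {f}) rs := by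
  induction rs generalizing J with
  | nil =>
    rw [Ideal.ofList_nil, sup_bot_eq] at hfreg
    exact ⟨hfreg, .nil _ _⟩
  | cons x rs ih =>
    obtain ⟨⟨e, he, hx⟩, hrs⟩ := List.forall_mem_cons.1 hrs
    obtain ⟨hxJ, hreg⟩ := (isWeaklyRegular_quotient_cons_iff J x rs).1 hreg
    rw [Ideal.ofList_cons, ← sup_assoc] at hfreg
    have hJx : (J ⊔ Ideal.span {x}).IsHomogeneous 𝒜 :=
      hJ.sup (Ideal.homogeneous_span 𝒜 _ (by rintro _ rfl; exact ⟨e, hx⟩))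
    obtain ⟨hfx, hregf⟩ := ih hJx hrs hreg hfreg
    rw [sup_right_comm] at hregf
    exact ⟨isSMulRegular_quotient_of_sup_span_singleton hJ he hx hf hxJ hfx,
      (isWeaklyRegular_quotient_cons_iff _ x rs).2
        ⟨isSMulRegular_quotient_sup_span_of_swap hxJ hfx, hregf⟩⟩

lemma exists_mem_sub_pow_mul_mem {L : Ideal A} (hL : L.IsHomogeneous 𝒜) {x : A} (hx : x ∈ 𝒜 1)
    {r : ℕ} (hLx : ContainsDegreeGE 𝒜 (r + 1) (L ⊔ Ideal.span {x})) (k : ℕ) :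
    ∀ u ∈ 𝒜 (k + r), ∃ v ∈ 𝒜 r, u - x ^ k * v ∈ L := by
  induction k with
  | zero => exact fun u hu => ⟨u, by simpa using hu, by simp⟩
  | succ k ih =>
    intro u hu
    obtain ⟨v, hv, huv⟩ := exists_mem_sub_mul_mem_of_mem_sup_span_singleton hL hx
      (s := k + r) (by convert hu using 2; omega) (hLx _ (by omega) u hu)
    obtain ⟨w, hw, hvw⟩ := ih v hv
    have heq : u - x ^ (k + 1) * w = (u - x * v) + x * (v - x ^ k * w) := by ring
    exact ⟨w, hw, heq ▸ add_mem huv (L.mul_mem_left x hvw)⟩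

lemma ContainsDegreeGE.mul_span {G : Set A} {d e : ℕ} {K : Ideal A} (hG : ∀ g ∈ G, g ∈ 𝒜 d)
    (hK : ContainsDegreeGE 𝒜 e K) (h : ContainsDegreeGE 𝒜 (e + d) (Ideal.span G)) :
    ContainsDegreeGE 𝒜 (e + d) (K * Ideal.span G) := by
  intro s hs u hu
  have hmem := h s hs u hu
  rw [← Ideal.submodule_span_eq, Submodule.mem_span_set'] at hmem
  obtain ⟨m, a, g, rfl⟩ := hmem
  rw [← decompose_of_mem_same 𝒜 hu, decompose_sum, DFinsupp.finsetSum_apply,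
    AddSubmonoidClass.coe_finsetSum]
  refine sum_mem fun i _ => ?_
  rw [smul_eq_mul, coe_decompose_mul_of_right_mem_of_le 𝒜 (hG _ (g i).2) (by omega)]
  exact Ideal.mul_mem_mul (hK (s - d) (by omega) _ (SetLike.coe_mem _))
    (Ideal.subset_span (g i).2)

theorem ContainsDegreeGE.span_pow {G : Set A} {d e : ℕ} (hG : ∀ g ∈ G, g ∈ 𝒜 d)
    (h : ContainsDegreeGE 𝒜 (e + d) (Ideal.span G)) (t : ℕ) :
    ContainsDegreeGE 𝒜 (e + t * d) (Ideal.span G ^ t) := by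
  induction t with
  | zero => intro s _ u _; simp
  | succ t ih =>
    rw [add_mul, one_mul, ← add_assoc, pow_succ]
    exact mul_span hG ih (h.mono (by omega) le_rfl)

lemma mem_radical_of_isIntegral_quotient {I : Ideal A} (hI : I.IsHomogeneous 𝒜)
    [Algebra.IsIntegral R (A ⧸ I)] {e : ℕ} (he : 0 < e) {x : A} (hx : x ∈ 𝒜 e) :
    x ∈ I.radical := by
  obtain ⟨p, hp, hpx⟩ := Algebra.IsIntegral.isIntegral (R := R) (Ideal.Quotient.mk I x)
  have hmem : Polynomial.aeval x p ∈ I := by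
    rw [← Ideal.Quotient.eq_zero_iff_mem, ← Ideal.Quotient.mkₐ_eq_mk R,
      ← Polynomial.aeval_algHom_apply]
    exact hpx
  refine ⟨p.natDegree, ?_⟩
  have hpow (j : ℕ) : x ^ j ∈ 𝒜 (j * e) := by simpa using SetLike.pow_mem_graded j hx
  have htop : GradedAlgebra.proj 𝒜 (p.natDegree * e) (Polynomial.aeval x p) = x ^ p.natDegree := by
    rw [Polynomial.aeval_eq_sum_range, map_sum, Finset.sum_eq_single p.natDegree]
    · rw [hp.coeff_natDegree, one_smul, GradedAlgebra.proj_apply,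
        decompose_of_mem_same 𝒜 (hpow _)]
    · intro j _ hj
      rw [map_smul, GradedAlgebra.proj_apply, decompose_of_mem_ne 𝒜 (hpow j)
        (by simpa [he.ne'] using hj), smul_zero]
    · simp
  exact htop ▸ hI _ hmem

end Graded

section GradedOverField

variable {F A : Type*} [Field F] [CommRing A] [Algebra F A] {𝒜 : ℕ → Submodule F A}
  [GradedAlgebra 𝒜] [∀ s, FiniteDimensional F (𝒜 s)]

theorem ContainsDegreeGE.sup_span_of_isSMulRegular {L : Ideal A} (hL : L.IsHomogeneous 𝒜)
    {d e : ℕ} {x f : A} (hx : x ∈ 𝒜 1) (hf : f ∈ 𝒜 d) (hfL : IsSMulRegular (A ⧸ L) f)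
    (hLx : ContainsDegreeGE 𝒜 e (L ⊔ Ideal.span {x})) :
    ContainsDegreeGE 𝒜 (e + d - 1) (L ⊔ Ideal.span {f}) := by
  intro s hs u hu
  rcases Nat.eq_zero_or_pos e with rfl | he
  · have hone : (1 : A) ∈ 𝒜 0 := SetLike.one_mem_graded 𝒜
    have hL_top : L = ⊤ := (Ideal.eq_top_iff_one L).2 <|
      mem_of_mem_sup_span_singleton_of_lt hL hx hone one_pos (hLx 0 le_rfl 1 hone)
    simp [hL_top]
  · obtain ⟨r, rfl⟩ : ∃ r, s = d + r := ⟨s - d, by omega⟩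
    have hdiv := exists_mem_sub_pow_mul_mem hL hx (hLx.mono (show e ≤ r + 1 by omega) le_rfl) d
    obtain ⟨v, hv, huv⟩ := hdiv u hu
    -- `f` maps the degree `r` part into the image of `x ^ d`, so the dimension count applies.
    obtain ⟨w, -, hvw⟩ := exists_sub_mul_mem_of_isSMulRegular (g := x ^ d) hfL
      (fun a ha => hdiv (f * a) (SetLike.mul_mem_graded hf ha)) v hv
    exact mem_sup_span_singleton_iff_exists_sub_mul_mem.2 ⟨w, by simpa using add_mem huv hvw⟩

theorem ContainsDegreeGE.sup_span_of_isWeaklyRegular [Infinite F] [IsNoetherianRing A]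
    {J : Ideal A} (hJ : J.IsHomogeneous 𝒜) {rs : List A} (hrs : ∀ x ∈ rs, x ∈ 𝒜 1)
    (hreg : IsWeaklyRegular (A ⧸ J) rs) {e : ℕ} (he : ContainsDegreeGE 𝒜 e (J ⊔ Ideal.ofList rs))
    {G : Set A} {d : ℕ} (hG : ∀ g ∈ G, g ∈ 𝒜 d) (hrad : ∀ x ∈ rs, x ∈ (Ideal.span G).radical) :
    ContainsDegreeGE 𝒜 (e + rs.length * d - rs.length) (J ⊔ Ideal.span G) := by
  induction rs using List.reverseRecOn generalizing J e with
  | nil => exact he.mono (by simp) (by simp)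
  | append_singleton rs x ih =>
    simp only [List.forall_mem_append, List.forall_mem_singleton] at hrs hrad
    obtain ⟨hreg, hx⟩ := (isWeaklyRegular_quotient_append_iff J rs [x]).1 hreg
    rw [isWeaklyRegular_singleton_iff] at hx
    rw [Ideal.ofList_append, Ideal.ofList_singleton, ← sup_assoc] at he
    obtain ⟨k, hk⟩ := hrad.2
    obtain ⟨f, hfG, hf⟩ := exists_mem_span_isSMulRegular (F := F) ⟨x ^ k, hk, hx.pow k⟩
    have hfd : f ∈ 𝒜 d := Submodule.span_le.2 hG hfG
    have hfI : f ∈ Ideal.span G := Submodule.span_le_restrictScalars F A G hfG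
    have hJf : (J ⊔ Ideal.span {f}).IsHomogeneous 𝒜 :=
      hJ.sup (Ideal.homogeneous_span 𝒜 _ (by rintro _ rfl; exact ⟨d, hfd⟩))
    have hJrs : (J ⊔ Ideal.ofList rs).IsHomogeneous 𝒜 :=
      hJ.sup (Ideal.homogeneous_span 𝒜 _ fun y hy => ⟨1, hrs.1 y hy⟩)
    have hregf := (isWeaklyRegular_quotient_exchange hJ
      (fun y hy => ⟨1, one_pos, hrs.1 y hy⟩) hreg hfd hf).2
    have hef := he.sup_span_of_isSMulRegular hJrs hrs.2 hfd hf
    rw [sup_right_comm] at hef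
    refine (ih hJf hrs.1 hregf hef hrad.1).mono ?_
      (sup_le (sup_le_sup_left ((Ideal.span_singleton_le_iff_mem _).2 hfI) J) le_sup_right)
    rw [List.length_append, List.length_singleton, add_mul]
    rcases Nat.eq_zero_or_pos d with rfl | hd
    · simp only [mul_zero]
      omega
    · omega

end GradedOverField

section Polynomials

attribute [local instance] MvPolynomial.gradedAlgebra

variable {σ R F : Type*} [CommRing R] [Field F]

lemma isSMulRegular_X_quotient_span_X_image {s : Set σ} {i : σ} (hi : i ∉ s) :
    IsSMulRegular (MvPolynomial σ R ⧸ Ideal.span (X (R := R) '' s)) (X i : MvPolynomial σ R) := by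
  refine isSMulRegular_quotient_ideal_iff.2 fun u hu => ?_
  rw [mem_ideal_span_X_image] at hu ⊢
  intro m hm
  obtain ⟨j, hj, hjm⟩ := hu (Finsupp.single i 1 + m) (by
    rwa [mem_support_iff, coeff_X_mul, ← mem_support_iff])
  have hij : i ≠ j := fun h => hi (h ▸ hj)
  exact ⟨j, hj, by simpa [Finsupp.single_apply, hij] using hjm⟩

lemma isWeaklyRegular_quotient_span_X_image_map_X {s : Set σ} {l : List σ} (hl : l.Nodup)
    (hs : ∀ i ∈ l, i ∉ s) :
    IsWeaklyRegular (MvPolynomial σ R ⧸ Ideal.span (X (R := R) '' s)) (l.map (X (R := R))) := by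
  induction l generalizing s with
  | nil => exact .nil _ _
  | cons i l ih =>
    obtain ⟨hil, hl⟩ := List.nodup_cons.1 hl
    obtain ⟨his, hs⟩ := List.forall_mem_cons.1 hs
    rw [List.map_cons, isWeaklyRegular_quotient_cons_iff, ← Ideal.span_union, Set.union_singleton,
      ← Set.image_insert_eq]
    refine ⟨isSMulRegular_X_quotient_span_X_image his, ih hl fun j hj => ?_⟩
    rintro (rfl | hjs)
    · exact hil hj
    · exact hs j hj hjs

lemma containsDegreeGE_iff_idealOfVars_pow_le {k : ℕ} {J : Ideal (MvPolynomial σ R)} :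
    ContainsDegreeGE (homogeneousSubmodule σ R) k J ↔ idealOfVars σ R ^ k ≤ J := by
  constructor
  · intro h u hu
    rw [mem_pow_idealOfVars_iff] at hu
    rw [u.as_sum]
    exact sum_mem fun m hm => h m.degree (hu m hm) _ (isHomogeneous_monomial _ rfl)
  · intro h s hs u hu
    refine h ((mem_pow_idealOfVars_iff _ _).2 fun m hm => ?_)
    rw [Finsupp.degree_apply]
    exact hs.trans_eq (IsHomogeneous.degree_eq_sum_deg_support hu hm)

theorem containsDegreeGE_span_of_X_mem_radical [Infinite F] [Fintype σ]
    {G : Set (MvPolynomial σ F)} {d : ℕ} (hG : ∀ g ∈ G, g ∈ homogeneousSubmodule σ F d)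
    (hX : ∀ i, X i ∈ (Ideal.span G).radical) :
    ContainsDegreeGE (homogeneousSubmodule σ F) (1 + Fintype.card σ * d - Fintype.card σ)
      (Ideal.span G) := by
  have (s : ℕ) : FiniteDimensional F (homogeneousSubmodule σ F s) :=
    Module.Finite.iff_fg.2 (homogeneousSubmodule_fg σ F s)
  let vars : List (MvPolynomial σ F) := Finset.univ.toList.map X
  have hvars : Ideal.ofList vars = idealOfVars σ F := by
    simp [vars, Ideal.ofList, idealOfVars, Set.range]
  have hreg : IsWeaklyRegular (MvPolynomial σ F ⧸ (⊥ : Ideal (MvPolynomial σ F))) vars := by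
    rw [← Ideal.span_empty, ← Set.image_empty (X : σ → MvPolynomial σ F)]
    exact isWeaklyRegular_quotient_span_X_image_map_X (Finset.nodup_toList _)
      fun i _ => Set.notMem_empty i
  have hone : ContainsDegreeGE (homogeneousSubmodule σ F) 1 (⊥ ⊔ Ideal.ofList vars) := by
    rw [containsDegreeGE_iff_idealOfVars_pow_le, bot_sup_eq, hvars, pow_one]
  have := hone.sup_span_of_isWeaklyRegular (Ideal.IsHomogeneous.bot _)
    (by simp [vars, isHomogeneous_X]) hreg hG (by simpa [vars] using hX)
  simpa [vars] using this

lemma map_mem_ideal_map_iff {S : Type*} [CommRing S] [Algebra R S]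
    [Module.FaithfullyFlat R S] {I : Ideal (MvPolynomial σ R)} {u : MvPolynomial σ R} :
    map (algebraMap R S) u ∈ I.map (map (algebraMap R S)) ↔ u ∈ I := by
  let : Algebra (MvPolynomial σ R) (MvPolynomial σ S) := algebraMvPolynomial
  have : Module.FaithfullyFlat (MvPolynomial σ R) (MvPolynomial σ S) :=
    .of_linearEquiv _ _
      (Algebra.IsPushout.equiv R (MvPolynomial σ R) S (MvPolynomial σ S)).symm.toLinearEquiv
  exact SetLike.ext_iff.1 (I.comap_map_eq_self_of_faithfullyFlat (B := MvPolynomial σ S)) u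

theorem containsDegreeGE_span_of_finite_quotient [Fintype σ] {G : Set (MvPolynomial σ F)} {d : ℕ}
    (hG : ∀ g ∈ G, g ∈ homogeneousSubmodule σ F d)
    [Module.Finite F (MvPolynomial σ F ⧸ Ideal.span G)] :
    ContainsDegreeGE (homogeneousSubmodule σ F) (1 + Fintype.card σ * d - Fintype.card σ)
      (Ideal.span G) := by
  let φ : MvPolynomial σ F →+* MvPolynomial σ (AlgebraicClosure F) := map (algebraMap F _)
  have hφG : ∀ g ∈ φ '' G, g ∈ homogeneousSubmodule σ (AlgebraicClosure F) d := by
    rintro _ ⟨g, hg, rfl⟩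
    exact IsHomogeneous.map (hG g hg) _
  have hX (i : σ) : X i ∈ (Ideal.span (φ '' G)).radical := by
    obtain ⟨k, hk⟩ := mem_radical_of_isIntegral_quotient
      (Ideal.homogeneous_span (homogeneousSubmodule σ F) G fun g hg => ⟨d, hG g hg⟩) one_pos
      (isHomogeneous_X F i)
    refine ⟨k, ?_⟩
    simpa [φ, Ideal.map_span] using Ideal.mem_map_of_mem φ hk
  intro s hs u hu
  rw [← map_mem_ideal_map_iff (S := AlgebraicClosure F), Ideal.map_span]
  exact containsDegreeGE_span_of_X_mem_radical hφG hX s hs _ (IsHomogeneous.map hu _)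

theorem stmt_8_general [Fintype σ] [Nonempty σ] (d : ℕ) {G : Set (MvPolynomial σ F)}
    (hG : ∀ g ∈ G, g ∈ homogeneousSubmodule σ F d)
    (hfl : Module.Finite F (MvPolynomial σ F ⧸ Ideal.span G)) (t : ℕ) :
    idealOfVars σ F ^ (t * d + (Fintype.card σ - 1) * (d - 1)) ≤ Ideal.span G ^ t := by
  obtain ⟨n, hn⟩ := Nat.exists_eq_add_one.2 (Fintype.card_pos (α := σ))
  have hdeg : 1 + Fintype.card σ * d - Fintype.card σ ≤ (Fintype.card σ - 1) * (d - 1) + d := by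
    rw [hn, Nat.add_sub_cancel, Nat.mul_sub_one, add_mul]
    omega
  rw [← containsDegreeGE_iff_idealOfVars_pow_le, add_comm]
  exact ((containsDegreeGE_span_of_finite_quotient hG).mono hdeg le_rfl).span_pow hG t

end Polynomials

/-!
STATEMENT 8: Let `S = F[x_0, …, x_n]` be a polynomial ring over a field `F`, and let
`I ⊆ S` be an ideal generated by homogeneous forms of degree `d` such that `S/I` has finite
length (i.e. `S/I` is a finite-dimensional `F`-vector space).  Then for every `t ≥ 1` every
homogeneous polynomial of degree at least `t*d + n*(d-1)` lies in `I^t`; equivalently,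
`m^(t*d + n*(d-1)) ⊆ I^t`, where `m = (x_0, …, x_n)` is the maximal homogeneous ideal.
-/
theorem stmt_8 {F : Type*} [Field F] (n : ℕ) (d : ℕ)
    (I : Ideal (MvPolynomial (Fin (n + 1)) F))
    (G : Set (MvPolynomial (Fin (n + 1)) F))
    (hG : ∀ g ∈ G, g ∈ homogeneousSubmodule (Fin (n + 1)) F d)
    (hIG : I = Ideal.span G)
    (hfl : Module.Finite F (MvPolynomial (Fin (n + 1)) F ⧸ I))
    (t : ℕ) (ht : 1 ≤ t) :
    Ideal.span (Set.range (X : Fin (n + 1) → MvPolynomial (Fin (n + 1)) F)) ^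
        (t * d + n * (d - 1)) ≤ I ^ t := by
  subst hIG
  simpa using stmt_8_general d hG hfl t
end
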